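/- arXiv:1704.04717 — 8 statements merged into one kernel-verified Lean document; each statement's English description precedes it below -/
import Mathlib

section
/- Let Γ be a countable discrete group, N a finite normal subgroup of Γ, and μ a generating probability measure on Γ. Then every nonnegative μ-harmonic function on Γ is N-invariant: if f : Γ → [0,∞) satisfies ∑_{h∈Γ} μ(h)·f(h·x) = f(x) for every x ∈ Γ (the sum of nonnegative terms converging), then f(g·x) = f(x) for every g ∈ N and every x ∈ Γ. -/
/-- Convolution of two (signed) measures on a discrete group:
`(μ ∗ ν)(x) = ∑_y μ(y) ν(y⁻¹ x)`. -/
noncomputable def conv {G : Type*} [Group G] (μ ν : G → ℝ) : G → ℝ :=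
  fun x => ∑' y, μ y * ν (y⁻¹ * x)

/-- Convolution powers: `μ^{*0} = δ_e`, `μ^{*(n+1)} = μ^{*n} ∗ μ`. -/
noncomputable def convPow {G : Type*} [Group G] (μ : G → ℝ) : ℕ → G → ℝ
  | 0 => Set.indicator ({1} : Set G) (fun _ => (1 : ℝ))
  | n + 1 => conv (convPow μ n) μ

/-- A measure `μ` is generating if every point gets positive mass from some
convolution power `μ^{*n}`, `n ≥ 1`. -/
def IsGenerating {G : Type*} [Group G] (μ : G → ℝ) : Prop :=
  ∀ x : G, ∃ n : ℕ, 1 ≤ n ∧ 0 < convPow μ n x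

theorem hasSum_of_eq {α : Type*} {f g : α → ℝ} {a b : ℝ} (h : HasSum g b)
    (hfg : ∀ x, f x = g x) (hab : a = b) : HasSum f a := by
  obtain rfl : f = g := funext hfg
  rw [hab]; exact h

theorem convPow_harm {Γ : Type*} [Group Γ] 
    (μ : Γ → ℝ) (hμ0 : ∀ x, 0 ≤ μ x)
    (f : Γ → ℝ) (hf0 : ∀ x, 0 ≤ f x)
    (hharm : ∀ x : Γ, HasSum (fun h => μ h * f (h * x)) (f x)) (n : ℕ) :
    (∀ x, 0 ≤ convPow μ n x) ∧
    ∀ x : Γ, HasSum (fun h => convPow μ n h * f (h * x)) (f x) := by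
  induction n with
  | zero =>
    refine ⟨fun x => Set.indicator_nonneg (fun _ _ => zero_le_one) x, fun x => ?_⟩
    have := hasSum_single (f := fun h => convPow μ 0 h * f (h * x)) 1 (by
      intro b hb
      simp [convPow, hb])
    simpa [convPow] using this
  | succ n ih =>
    obtain ⟨h0, hs⟩ := ih
    refine ⟨fun x => tsum_nonneg fun y => mul_nonneg (h0 _) (hμ0 _), fun z => ?_⟩
    have A : Summable (fun p : Γ × Γ => μ p.1 * (convPow μ n p.2 * f (p.2 * (p.1 * z)))) := by
      rw [summable_prod_of_nonneg (fun p => mul_nonneg (hμ0 _) (mul_nonneg (h0 _) (hf0 _)))]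
      refine ⟨fun h => ((hs (h * z)).mul_left (μ h)).summable, ?_⟩
      convert (hharm z).summable using 2 with h
      exact ((hs (h * z)).mul_left (μ h)).tsum_eq
    have B : HasSum (fun p : Γ × Γ => μ p.1 * (convPow μ n p.2 * f (p.2 * (p.1 * z)))) (f z) := by
      have := A.hasSum.prod_fiberwise (fun h => (hs (h * z)).mul_left (μ h))
      rw [← this.unique (hharm z)]
      exact A.hasSum
    let e : Γ × Γ ≃ Γ × Γ :=
      { toFun := fun p => (p.2⁻¹ * p.1, p.2)
        invFun := fun p => (p.2 * p.1, p.2)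
        left_inv := fun p => by simp
        right_inv := fun p => by simp }
    have C := (e.hasSum_iff).2 B
    have D := C.prod_fiberwise (fun x => (C.summable.prod_factor x).hasSum)
    convert D using 2 with x
    simp only [convPow, conv]
    rw [← tsum_mul_right]
    refine tsum_congr fun y => ?_
    simp [e, mul_assoc]
    ring

theorem key_identity {ι : Type*} [Fintype ι] (p t : ι → ℝ) (hp : ∀ i, 0 ≤ p i) :
    (∑ i, p i) * ∑ i, (p i / (∑ i, p i) - t i) ^ 2 =
      (∑ i, p i ^ 2) / (∑ i, p i) - 2 * ∑ i, t i * p i + (∑ i, t i ^ 2) * ∑ i, p i := by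
  by_cases h : ∑ i, p i = 0
  · have hz : ∀ i, p i = 0 := fun i =>
      (Finset.sum_eq_zero_iff_of_nonneg (fun i _ => hp i)).1 h i (Finset.mem_univ i)
    simp [hz]
  · set F := ∑ i, p i
    have : ∀ i, (p i / F - t i) ^ 2 = p i ^ 2 * (1 / F ^ 2) - (2 / F) * (t i * p i) + t i ^ 2 := by
      intro i; field_simp; ring
    simp only [this, Finset.sum_add_distrib, Finset.sum_sub_distrib, ← Finset.sum_mul,
      ← Finset.mul_sum]
    field_simp

theorem sum_sq_diff {ι : Type*} [Fintype ι] (p : ι → ℝ) :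
    ∑ a, ∑ b, (p b - p a) ^ 2 = 2 * (Fintype.card ι * (∑ i, p i ^ 2) - (∑ i, p i) ^ 2) := by
  have : ∀ a b, (p b - p a) ^ 2 = p b ^ 2 - 2 * p a * p b + p a ^ 2 := by intros; ring
  simp only [this, Finset.sum_add_distrib, Finset.sum_sub_distrib, ← Finset.mul_sum,
    ← Finset.sum_mul, Finset.sum_const, Finset.card_univ, nsmul_eq_mul]
  ring

theorem harm_core {Γ : Type*} [Group Γ] (N : Subgroup Γ) [N.Normal] [Fintype N]
    (μ : Γ → ℝ) (hμ0 : ∀ x, 0 ≤ μ x) (c : ℝ) (hc : 0 < c) (hμc : ∀ n : N, c ≤ μ n)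
    (f : Γ → ℝ) (hf0 : ∀ x, 0 ≤ f x)
    (hharm : ∀ x : Γ, HasSum (fun h => μ h * f (h * x)) (f x)) (y : Γ) (a b : N) :
    f (y * a) = f (y * b) := by
  let F : Γ → ℝ := fun z => ∑ a : N, f (z * a)
  let S : Γ → ℝ := fun z => ∑ a : N, f (z * a) ^ 2
  let q : Γ → ℝ := fun z => S z / F z
  let M : ℝ := Fintype.card N
  have hM : 0 < M := by simp only [M]; exact_mod_cast Fintype.card_pos
  have hF0 : ∀ z, 0 ≤ F z := fun z => Finset.sum_nonneg fun a _ => hf0 _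
  have hS0 : ∀ z, 0 ≤ S z := fun z => Finset.sum_nonneg fun a _ => sq_nonneg _
  have hq0 : ∀ z, 0 ≤ q z := fun z => div_nonneg (hS0 z) (hF0 z)
  have hSF : ∀ z, S z ≤ F z * F z := fun z => by
    simp only [S, F]
    rw [← sq]
    exact Finset.sum_sq_le_sq_sum_of_nonneg fun a _ => hf0 _
  have hqF : ∀ z, q z ≤ F z := fun z => div_le_of_le_mul₀ (hF0 z) (hF0 z) (hSF z)
  have hfa : ∀ z (a : N), HasSum (fun h => μ h * f (h * z * a)) (f (z * a)) := fun z a => by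
    simpa [mul_assoc] using hharm (z * a)
  have hF : ∀ z, HasSum (fun h => μ h * F (h * z)) (F z) := fun z => by
    simp only [F, Finset.mul_sum]
    exact hasSum_sum fun a _ => hfa z a
  have hqs : ∀ z, Summable (fun h => μ h * q (h * z)) := fun z =>
    Summable.of_nonneg_of_le (fun h => mul_nonneg (hμ0 h) (hq0 _))
      (fun h => mul_le_mul_of_nonneg_left (hqF _) (hμ0 h)) (hF z).summable
  have conj : ∀ (z : Γ) (n : N), (n : Γ) * z = z * (MulAut.conjNormal z⁻¹ n : N) := by
    intro z n; simp [mul_assoc]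
  have inv1 : ∀ (z : Γ) (n : N) (φ : ℝ → ℝ), ∑ a : N, φ (f (n * z * a)) = ∑ a : N, φ (f (z * a)) := by
    intro z n φ
    rw [← Equiv.sum_comp (Equiv.mulLeft (MulAut.conjNormal z⁻¹ n : N)) (fun b : N => φ (f (z * b)))]
    refine Finset.sum_congr rfl fun a _ => ?_
    rw [conj]; simp [mul_assoc]
  have inv2 : ∀ (z : Γ) (a : N) (φ : ℝ → ℝ), ∑ n : N, φ (f (n * z * a)) = ∑ b : N, φ (f (z * b)) := by
    intro z a φ
    rw [← Equiv.sum_comp ((MulAut.conjNormal z⁻¹ : MulAut N).toEquiv.trans (Equiv.mulRight a))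
      (fun b : N => φ (f (z * b)))]
    refine Finset.sum_congr rfl fun n _ => ?_
    rw [conj]; simp [mul_assoc]
  let v : Γ → ℝ := fun z => M * q z - F z
  have hq : ∀ z, q z + c * (2 * v z) ≤ ∑' h, μ h * q (h * z) := by
    intro z
    let t : N → ℝ := fun a => f (z * a) / F z
    let g : Γ → ℝ := fun h => F (h * z) * ∑ a : N, (f (h * z * a) / F (h * z) - t a) ^ 2
    have hg0 : ∀ h, 0 ≤ g h := fun h =>
      mul_nonneg (hF0 _) (Finset.sum_nonneg fun a _ => sq_nonneg _)
    have hgi : ∀ h, g h = q (h * z) - 2 * ∑ a, t a * f (h * z * a) + (∑ a, t a ^ 2) * F (h * z) :=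
      fun h => key_identity (fun a : N => f (h * z * a)) t (fun a => hf0 _)
    have hg1 : q z - 2 * ∑ a, t a * f (z * a) + (∑ a, t a ^ 2) * F z = 0 := by
      have := hgi 1
      simp only [one_mul] at this
      rw [← this]
      simp [g, t]
    have hgs : HasSum (fun h => μ h * g h) (∑' h, μ h * q (h * z) - q z) := by
      have h1 : HasSum (fun h => ∑ a, t a * (μ h * f (h * z * a))) (∑ a, t a * f (z * a)) :=
        hasSum_sum fun a _ => (hfa z a).mul_left (t a)
      have h2 := (((hqs z).hasSum.sub (h1.mul_left 2)).add ((hF z).mul_left (∑ a, t a ^ 2)))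
      refine hasSum_of_eq h2 (fun h => ?_) ?_
      · rw [hgi]
        have : ∑ a, t a * (μ h * f (h * z * a)) = μ h * ∑ a, t a * f (h * z * a) := by
          rw [Finset.mul_sum]
          exact Finset.sum_congr rfl fun a _ => by ring
        rw [this]; ring
      · linarith
    have h3 : ∑ n : N, μ n * g n ≤ ∑' h, μ h * q (h * z) - q z := by
      have := sum_le_hasSum (Finset.univ.map (Function.Embedding.subtype (· ∈ N)))
        (fun h _ => mul_nonneg (hμ0 h) (hg0 h)) hgs
      simpa using this
    have h4 : ∑ n : N, c * g n ≤ ∑ n : N, μ n * g n :=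
      Finset.sum_le_sum fun n _ => mul_le_mul_of_nonneg_right (hμc n) (hg0 _)
    have h5 : ∑ n : N, g n = 2 * v z := by
      have e1 : ∀ n : N, g n = F z * ∑ a : N, ((f (n * z * a) - f (z * a)) / F z) ^ 2 := by
        intro n
        have : F (n * z) = F z := inv1 z n id
        simp only [g, t, this, sub_div]
      simp only [e1, ← Finset.mul_sum]
      rw [Finset.sum_comm]
      have e2 : ∀ a : N, ∑ n : N, ((f (n * z * a) - f (z * a)) / F z) ^ 2
          = (∑ b : N, (f (z * b) - f (z * a)) ^ 2) / F z ^ 2 := by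
        intro a
        rw [inv2 z a (fun r => ((r - f (z * a)) / F z) ^ 2), Finset.sum_div]
        simp only [div_pow]
      simp only [e2]
      rw [← Finset.sum_div, sum_sq_diff (fun a : N => f (z * a))]
      change F z * (2 * (M * S z - F z ^ 2) / F z ^ 2) = 2 * (M * (S z / F z) - F z)
      by_cases h : F z = 0
      · simp [h]
      · field_simp
    rw [← Finset.mul_sum, h5] at h4
    linarith
  let d : ℝ := 2 * c * M
  have hd : 0 < d := by positivity
  have hT : ∀ (T : ℕ) z, (1 + d) ^ T * v z ≤ M * F z := by
    intro T
    induction T with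
    | zero =>
      intro z
      have := mul_le_mul_of_nonneg_left (hqF z) hM.le
      have := hF0 z
      simp only [v, pow_zero]; linarith
    | succ T ih =>
      intro z
      have hv : HasSum (fun h => μ h * v (h * z)) (M * (∑' h, μ h * q (h * z)) - F z) := by
        refine hasSum_of_eq (((hqs z).hasSum.mul_left M).sub (hF z)) (fun h => ?_) rfl
        simp only [v]; ring
      have h1 : (1 + d) * v z ≤ M * (∑' h, μ h * q (h * z)) - F z := by
        have := mul_le_mul_of_nonneg_left (hq z) hM.le
        have e : (1 + d) * v z = M * (q z + c * (2 * v z)) - F z := by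
          simp only [d, v]; ring
        linarith
      have h2 : (1 + d) ^ T * (M * (∑' h, μ h * q (h * z)) - F z) ≤ M * F z := by
        refine hasSum_le (fun h => ?_) (hv.mul_left ((1 + d) ^ T)) ((hF z).mul_left M)
        have := mul_le_mul_of_nonneg_left (ih (h * z)) (hμ0 h)
        linarith
      have h3 := mul_le_mul_of_nonneg_left h1 (show 0 ≤ (1 + d) ^ T by positivity)
      rw [pow_succ]; linarith
  have hv0 : v y ≤ 0 := by
    by_contra! hpos
    obtain ⟨T, hT'⟩ := pow_unbounded_of_one_lt (M * F y / v y) (show 1 < 1 + d by linarith)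
    rw [div_lt_iff₀ hpos] at hT'
    linarith [hT T y]
  have hz : ∑ a : N, ∑ b : N, (f (y * b) - f (y * a)) ^ 2 ≤ 0 := by
    rw [sum_sq_diff (fun a : N => f (y * a))]
    change 2 * (M * S y - F y ^ 2) ≤ 0
    by_cases h : F y = 0
    · have := hSF y
      have := hS0 y
      have : S y = 0 := by rw [h] at *; linarith
      simp [this, h]
    · have e : M * S y - F y ^ 2 = v y * F y := by
        simp only [v, q]; field_simp
      rw [e]
      have := mul_nonneg (neg_nonneg.2 hv0) (hF0 y)
      linarith
  have h1 := Finset.single_le_sum (f := fun b' : N => ∑ a' : N, (f (y * a') - f (y * b')) ^ 2)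
    (fun b' _ => Finset.sum_nonneg fun a' _ => sq_nonneg _) (Finset.mem_univ b)
  have h2 := Finset.single_le_sum (f := fun a' : N => (f (y * a') - f (y * b)) ^ 2)
    (fun a' _ => sq_nonneg _) (Finset.mem_univ a)
  have h3 : (f (y * a) - f (y * b)) ^ 2 = 0 :=
    le_antisymm (h2.trans (h1.trans hz)) (sq_nonneg _)
  exact sub_eq_zero.1 (pow_eq_zero_iff (two_ne_zero) |>.1 h3)

/-- Every nonnegative `μ`-harmonic function on a countable discrete group `Γ`
with respect to a generating probability measure `μ` is invariant under a
finite normal subgroup `N`. -/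
theorem nonneg_harmonic_invariant_of_finite_normal
    {Γ : Type*} [Group Γ] [Countable Γ]
    (N : Subgroup Γ) [N.Normal] [Finite N]
    (μ : Γ → ℝ) (hμ0 : ∀ x, 0 ≤ μ x) (hμ1 : HasSum μ 1)
    (hgen : IsGenerating μ)
    (f : Γ → ℝ) (hf0 : ∀ x, 0 ≤ f x)
    (hharm : ∀ x : Γ, HasSum (fun h => μ h * f (h * x)) (f x)) :
    ∀ g ∈ N, ∀ x : Γ, f (g * x) = f x := by
  classical
  intro g hg x
  haveI : Fintype N := Fintype.ofFinite N
  have hP := convPow_harm μ hμ0 f hf0 hharm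
  choose k hk1 hk using hgen
  let M : ℝ := Fintype.card N
  have hM : 0 < M := by simp only [M]; exact_mod_cast Fintype.card_pos
  let l : Γ → ℝ := fun h => M⁻¹ * ∑ n : N, convPow μ (k n) h
  have hl0 : ∀ h, 0 ≤ l h := fun h =>
    mul_nonneg (by positivity) (Finset.sum_nonneg fun n _ => (hP _).1 h)
  have hlpos : ∀ n : N, 0 < l n := fun n =>
    mul_pos (by positivity) (Finset.sum_pos' (fun m _ => (hP _).1 _)
      ⟨n, Finset.mem_univ n, hk n⟩)
  have hlh : ∀ x, HasSum (fun h => l h * f (h * x)) (f x) := by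
    intro x
    have := (hasSum_sum (s := Finset.univ) fun (n : N) _ => (hP (k n)).2 x).mul_left M⁻¹
    refine hasSum_of_eq this (fun h => ?_) ?_
    · simp only [l]
      rw [← Finset.sum_mul, mul_assoc]
    · simp only [Finset.sum_const, Finset.card_univ, nsmul_eq_mul]
      change _ = M⁻¹ * (M * _)
      field_simp
  obtain ⟨n0, hn0⟩ := Finite.exists_min (fun n : N => l n)
  have := harm_core N l hl0 (l n0) (hlpos n0) hn0 f hf0 hlh x
    (MulAut.conjNormal x⁻¹ ⟨g, hg⟩ : N) 1
  simpa [mul_assoc] using this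
end

section
/- Let Γ be a countable discrete group, N a finite normal subgroup of Γ, π : Γ → Γ/N the quotient homomorphism, μ a generating probability measure on Γ, and μ̄ its pushforward to Γ/N (so μ̄(c) = ∑_{x : π(x)=c} μ(x)). Then the map f ↦ f∘π is a bijection from the set of bounded μ̄-harmonic functions Γ/N → ℂ onto the set of bounded μ-harmonic functions Γ → ℂ. -/
/-- The pushforward of a measure `μ` on `Γ` to the quotient group `Γ/N`:
`μ̄(c) = ∑_{x : π(x) = c} μ(x)`. -/
noncomputable def pushforward {Γ : Type*} [Group Γ] (N : Subgroup Γ) [N.Normal]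
    (μ : Γ → ℝ) : Γ ⧸ N → ℝ :=
  fun c => ∑' x : {x : Γ // (QuotientGroup.mk x : Γ ⧸ N) = c}, μ x

theorem convPow_nonneg_aux {G : Type*} [Group G] (μ : G → ℝ) (h0 : ∀ x, 0 ≤ μ x) (n : ℕ) :
    ∀ x, 0 ≤ convPow μ n x := by
  induction n with
  | zero => intro x; exact Set.indicator_nonneg (fun _ _ => zero_le_one) x
  | succ k ih => intro x; exact tsum_nonneg fun y => mul_nonneg (ih y) (h0 _)

theorem harnack_aux {G : Type*} [Group G] (μ : G → ℝ) (h0 : ∀ x, 0 ≤ μ x) (n : ℕ) :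
    ∀ g, 0 < convPow μ n g → ∃ K : ℝ, 0 ≤ K ∧ ∀ w : G → ℝ, (∀ x, 0 ≤ w x) →
      (∀ x, HasSum (fun h => μ h * w (h * x)) (w x)) → ∀ x, w (g * x) ≤ K * w x := by
  induction n with
  | zero =>
    intro g hg
    have : g = 1 := by
      by_contra hne
      simp [convPow, hne] at hg
    subst this
    exact ⟨1, zero_le_one, fun w _ _ x => by simp⟩
  | succ k ih =>
    intro g hg
    have : ∃ y, convPow μ k y * μ (y⁻¹ * g) ≠ 0 := by
      by_contra hne
      push Not at hne
      simp [convPow, conv, hne] at hg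
    obtain ⟨y, hy⟩ := this
    have hy1 : 0 < convPow μ k y :=
      lt_of_le_of_ne (convPow_nonneg_aux μ h0 k y) (Ne.symm (left_ne_zero_of_mul hy))
    have hy2 : 0 < μ (y⁻¹ * g) := lt_of_le_of_ne (h0 _) (Ne.symm (right_ne_zero_of_mul hy))
    obtain ⟨K, hK, hw⟩ := ih y hy1
    refine ⟨K * (μ (y⁻¹ * g))⁻¹, by positivity, fun w w0 wh x => ?_⟩
    have h1 := hw w w0 wh (y⁻¹ * g * x)
    have h2 : μ (y⁻¹ * g) * w (y⁻¹ * g * x) ≤ w x :=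
      le_hasSum (wh x) (y⁻¹ * g) fun j _ => mul_nonneg (h0 _) (w0 _)
    have h3 : w (y⁻¹ * g * x) ≤ (μ (y⁻¹ * g))⁻¹ * w x := by
      rw [inv_mul_eq_div, le_div_iff₀ hy2]; linarith
    calc w (g * x) = w (y * (y⁻¹ * g * x)) := by congr 1; group
      _ ≤ K * w (y⁻¹ * g * x) := h1
      _ ≤ K * ((μ (y⁻¹ * g))⁻¹ * w x) := mul_le_mul_of_nonneg_left h3 hK
      _ = _ := by ring

theorem real_invariant_aux {Γ : Type*} [Group Γ] (N : Subgroup Γ) [N.Normal] [Finite N]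
    (μ : Γ → ℝ) (hμ0 : ∀ x, 0 ≤ μ x) (hμ1 : HasSum μ 1) (hgen : IsGenerating μ)
    (f : Γ → ℝ) (C : ℝ) (hC : ∀ x, |f x| ≤ C)
    (hf : ∀ x, HasSum (fun h => μ h * f (h * x)) (f x)) (n : N) (x : Γ) :
    f (n * x) ≤ f x := by
  have hK : ∀ g : Γ, ∃ K : ℝ, 0 ≤ K ∧ ∀ w : Γ → ℝ, (∀ x, 0 ≤ w x) →
      (∀ x, HasSum (fun h => μ h * w (h * x)) (w x)) → ∀ x, w (g * x) ≤ K * w x := by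
    intro g
    obtain ⟨k, _, hk⟩ := hgen g
    exact harnack_aux μ hμ0 k g hk
  choose K hK0 hK using hK
  obtain ⟨M, hM⟩ : ∃ M : ℝ, ∀ n : N, K n ≤ M := by
    obtain ⟨M, hM⟩ := (Set.finite_range (fun n : N => K n)).bddAbove
    exact ⟨M, fun n => hM ⟨n, rfl⟩⟩
  have hM0 : 0 ≤ M := (hK0 _).trans (hM 1)
  set φ : N × Γ → ℝ := fun p => f (p.1 * p.2) - f p.2 with hφ
  have hbdd : BddAbove (Set.range φ) := by
    refine ⟨2 * C, ?_⟩
    rintro _ ⟨p, rfl⟩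
    have h1 := abs_le.1 (hC (p.1 * p.2))
    have h2 := abs_le.1 (hC p.2)
    simp only [hφ]; linarith
  set S := ⨆ p, φ p with hS
  have hle : ∀ (n : N) (x : Γ), f (n * x) - f x ≤ S := fun n x => le_ciSup hbdd (n, x)
  suffices hS0 : S ≤ 0 by linarith [hle n x]
  have key : ∀ ε > 0, S ≤ M * ε := by
    intro ε hε
    obtain ⟨⟨a, x₀⟩, ha⟩ := exists_lt_of_lt_ciSup (show S - ε < ⨆ p, φ p by rw [← hS]; linarith)
    simp only [hφ] at ha
    let w : Γ → ℝ := fun y => S - (f (y * (a * x₀)) - f (y * x₀))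
    have w0 : ∀ y, 0 ≤ w y := by
      intro y
      have := hle ⟨y * a * y⁻¹, Subgroup.Normal.conj_mem inferInstance _ a.2 y⟩ (y * x₀)
      have e : (y * a * y⁻¹) * (y * x₀) = y * (a * x₀) := by group
      simp only [e] at this
      simp only [w]; linarith
    have wh : ∀ y, HasSum (fun h => μ h * w (h * y)) (w y) := by
      intro y
      have := (hμ1.mul_right S).sub ((hf (y * (a * x₀))).sub (hf (y * x₀)))
      rw [one_mul] at this
      have e : (fun h => μ h * w (h * y)) = fun b => μ b * S -
          (μ b * f (b * (y * (a * x₀))) - μ b * f (b * (y * x₀))) := by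
        funext h
        simp only [w, mul_assoc]; ring
      rw [e]
      exact this
    have w1 : w 1 ≤ ε := by simp only [w, one_mul]; linarith
    have hj : ∀ b : N, w b ≤ M * ε := by
      intro b
      have := hK b w w0 wh 1
      rw [mul_one] at this
      exact this.trans (mul_le_mul (hM b) w1 (w0 1) hM0)
    have hm : 0 < orderOf a := orderOf_pos a
    have hsum : ∑ j ∈ Finset.range (orderOf a), w ((a ^ j : N) : Γ) = orderOf a * S := by
      have e : ∀ j ∈ Finset.range (orderOf a), w ((a ^ j : N) : Γ) =
          S - ((fun j : ℕ => f (((a ^ j : N) : Γ) * x₀)) (j + 1)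
            - (fun j : ℕ => f (((a ^ j : N) : Γ) * x₀)) j) := by
        intro j _
        simp only [w, pow_succ, Subgroup.coe_mul, mul_assoc]
      rw [Finset.sum_congr rfl e, Finset.sum_sub_distrib, Finset.sum_range_sub (fun j : ℕ => f (((a ^ j : N) : Γ) * x₀))]
      simp [pow_orderOf_eq_one]
      try simp [← Subgroup.coe_pow, pow_orderOf_eq_one]
    have hle2 : ∑ j ∈ Finset.range (orderOf a), w ((a ^ j : N) : Γ) ≤ orderOf a * (M * ε) := by
      refine (Finset.sum_le_sum fun j _ => hj (a ^ j)).trans ?_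
      simp
    rw [hsum] at hle2
    exact le_of_mul_le_mul_left hle2 (by exact_mod_cast hm)
  by_contra hpos
  push Not at hpos
  have := key (S / (2 * (M + 1))) (by positivity)
  have h2 : M * (S / (2 * (M + 1))) ≤ S / 2 := by
    rw [mul_div_assoc', div_le_div_iff₀ (by positivity) (by positivity)]
    nlinarith
  linarith

theorem complex_invariant_aux {Γ : Type*} [Group Γ] (N : Subgroup Γ) [N.Normal] [Finite N]
    (μ : Γ → ℝ) (hμ0 : ∀ x, 0 ≤ μ x) (hμ1 : HasSum μ 1) (hgen : IsGenerating μ)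
    (f : Γ → ℂ) (C : ℝ) (hC : ∀ x, ‖f x‖ ≤ C)
    (hf : ∀ x, HasSum (fun h => (μ h : ℂ) * f (h * x)) (f x)) (n : N) (x : Γ) :
    f (n * x) = f x := by
  have hre : ∀ x, HasSum (fun h => μ h * (f (h * x)).re) (f x).re := fun x => by
    simpa using Complex.hasSum_re (hf x)
  have him : ∀ x, HasSum (fun h => μ h * (f (h * x)).im) (f x).im := fun x => by
    simpa using Complex.hasSum_im (hf x)
  have hr := real_invariant_aux N μ hμ0 hμ1 hgen (fun x => (f x).re) C
    (fun x => (Complex.abs_re_le_norm _).trans (hC x)) hre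
  have hi := real_invariant_aux N μ hμ0 hμ1 hgen (fun x => (f x).im) C
    (fun x => (Complex.abs_im_le_norm _).trans (hC x)) him
  apply Complex.ext
  · refine le_antisymm (hr n x) ?_
    have := hr n⁻¹ (n * x)
    simpa using this
  · refine le_antisymm (hi n x) ?_
    have := hi n⁻¹ (n * x)
    simpa using this

theorem push_hasSum_aux {Γ : Type*} [Group Γ] (N : Subgroup Γ) [N.Normal]
    (μ : Γ → ℝ) (hμ1 : HasSum μ 1) (F : Γ ⧸ N → ℂ) (a : ℂ)
    (h : HasSum (fun x => (μ x : ℂ) * F (QuotientGroup.mk x)) a) :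
    HasSum (fun d => (pushforward N μ d : ℂ) * F d) a := by
  have h1 := (Equiv.sigmaFiberEquiv (fun x : Γ => (QuotientGroup.mk x : Γ ⧸ N))).hasSum_iff.2 h
  refine h1.sigma fun d => ?_
  have h2 : HasSum (fun x : {x : Γ // (QuotientGroup.mk x : Γ ⧸ N) = d} => μ x)
      (pushforward N μ d) := (hμ1.summable.subtype _).hasSum
  have h3 := (Complex.hasSum_ofReal.2 h2).mul_right (F d)
  have e : (fun i : {x : Γ // (QuotientGroup.mk x : Γ ⧸ N) = d} =>
      ((μ (i : Γ) : ℝ) : ℂ) * F (QuotientGroup.mk (i : Γ))) =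
      fun i : {x : Γ // (QuotientGroup.mk x : Γ ⧸ N) = d} => ((μ (i : Γ) : ℝ) : ℂ) * F d := by
    funext x
    rw [x.2]
  rw [← e] at h3
  exact h3

/-- For a finite normal subgroup `N` of a countable discrete group `Γ` and a
generating probability measure `μ` on `Γ`, composition with the quotient map
`π : Γ → Γ/N` is a bijection from bounded `μ̄`-harmonic functions on `Γ/N` onto
bounded `μ`-harmonic functions on `Γ`. -/
theorem poisson_boundary_of_finite_normal
    {Γ : Type*} [Group Γ] [Countable Γ]
    (N : Subgroup Γ) [N.Normal] [Finite N]
    (μ : Γ → ℝ) (hμ0 : ∀ x, 0 ≤ μ x) (hμ1 : HasSum μ 1)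
    (hgen : IsGenerating μ) :
    Set.BijOn (fun (f : Γ ⧸ N → ℂ) => fun x : Γ => f (QuotientGroup.mk x))
      {f : Γ ⧸ N → ℂ | (∃ C : ℝ, ∀ c, ‖f c‖ ≤ C) ∧
        ∀ c : Γ ⧸ N, HasSum (fun d => (pushforward N μ d : ℂ) * f (d * c)) (f c)}
      {f : Γ → ℂ | (∃ C : ℝ, ∀ x, ‖f x‖ ≤ C) ∧
        ∀ x : Γ, HasSum (fun h => (μ h : ℂ) * f (h * x)) (f x)} := by
  refine ⟨?_, ?_, ?_⟩
  · rintro F ⟨⟨C, hC⟩, hF⟩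
    refine ⟨⟨C, fun x => hC _⟩, fun x => ?_⟩
    have hs : Summable (fun h : Γ => (μ h : ℂ) * F ((QuotientGroup.mk h : Γ ⧸ N) * QuotientGroup.mk x)) := by
      refine Summable.of_norm_bounded (hμ1.summable.mul_right C) fun h => ?_
      rw [norm_mul, Complex.norm_real, Real.norm_of_nonneg (hμ0 h)]
      exact mul_le_mul_of_nonneg_left (hC _) (hμ0 h)
    have h1 := push_hasSum_aux N μ hμ1 (fun d => F (d * QuotientGroup.mk x))
      (∑' h : Γ, (μ h : ℂ) * F ((QuotientGroup.mk h : Γ ⧸ N) * QuotientGroup.mk x)) hs.hasSum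
    have h2 := h1.unique (hF (QuotientGroup.mk x))
    have h3 := hs.hasSum
    rw [h2] at h3
    exact h3
  · intro F _ G _ hFG
    funext c
    induction c using QuotientGroup.induction_on with
    | H x => exact congrFun hFG x
  · rintro f ⟨⟨C, hC⟩, hf⟩
    have hinv := complex_invariant_aux N μ hμ0 hμ1 hgen f C hC hf
    let F : Γ ⧸ N → ℂ := fun c => f c.out
    have hF : ∀ x : Γ, F (QuotientGroup.mk x) = f x := by
      intro x
      obtain ⟨n, hn⟩ := QuotientGroup.mk_out_eq_mul N x
      have := hinv ⟨x * n * x⁻¹, Subgroup.Normal.conj_mem inferInstance _ n.2 x⟩ x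
      simp only [F, hn]
      simpa using this
    refine ⟨F, ⟨⟨C, fun c => hC _⟩, fun c => ?_⟩, funext hF⟩
    induction c using QuotientGroup.induction_on with
    | H x =>
      refine push_hasSum_aux N μ hμ1 (fun d => F (d * QuotientGroup.mk x)) _ ?_
      have e : (fun h : Γ => (μ h : ℂ) * F ((QuotientGroup.mk h : Γ ⧸ N) * QuotientGroup.mk x))
          = fun h => (μ h : ℂ) * f (h * x) := by
        funext h
        rw [← QuotientGroup.mk_mul, hF]
      rw [hF]
      exact e ▸ hf x
end

section
/- Let X be a normed vector space, E : X → X a bounded linear projection (E∘E = E), and P₁, P₂ : X → X bounded linear operators such that E commutes with both P₁ and P₂, ‖P₂ x‖ ≤ ‖x‖ for all x ∈ X, and there exists δ > 0 such that ‖P₁ y‖ ≤ (1−δ)·‖y‖ for every y ∈ X with E y = 0. Let 0 < t ≤ 1 and P = t·P₁ + (1−t)·P₂. Then every x ∈ X with P x = x satisfies E x = x. -/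
/-- Abstract contraction argument: if `E` is a bounded linear projection
commuting with bounded operators `P₁`, `P₂`, where `P₂` is a contraction and
`P₁` is a strict contraction on `ker E`, then every fixed point of the convex
combination `P = t P₁ + (1-t) P₂` (with `0 < t ≤ 1`) lies in the range of `E`,
i.e. satisfies `E x = x`. -/
theorem fixedPoint_of_convex_combination_is_invariant
    {X : Type*} [NormedAddCommGroup X] [NormedSpace ℝ X]
    (E P₁ P₂ : X →L[ℝ] X)
    (hE : E.comp E = E)
    (hEP₁ : E.comp P₁ = P₁.comp E) (hEP₂ : E.comp P₂ = P₂.comp E)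
    (hP₂ : ∀ x : X, ‖P₂ x‖ ≤ ‖x‖)
    (δ : ℝ) (hδ : 0 < δ)
    (hP₁ : ∀ y : X, E y = 0 → ‖P₁ y‖ ≤ (1 - δ) * ‖y‖)
    (t : ℝ) (ht0 : 0 < t) (ht1 : t ≤ 1)
    (x : X) (hx : t • P₁ x + (1 - t) • P₂ x = x) :
    E x = x := by
  have e0 : E (E x) = E x := by
    simpa using congrArg (fun f : X →L[ℝ] X => f x) hE
  have e1 : E (P₁ x) = P₁ (E x) := by
    simpa using congrArg (fun f : X →L[ℝ] X => f x) hEP₁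
  have e2 : E (P₂ x) = P₂ (E x) := by
    simpa using congrArg (fun f : X →L[ℝ] X => f x) hEP₂
  have hEx : t • P₁ (E x) + (1 - t) • P₂ (E x) = E x := by
    have h := congrArg E hx
    rwa [map_add, map_smul, map_smul, e1, e2] at h
  obtain ⟨y, hy⟩ : ∃ y, y = x - E x := ⟨_, rfl⟩
  have hy0 : E y = 0 := by rw [hy, map_sub, e0, sub_self]
  have hPy : t • P₁ y + (1 - t) • P₂ y = y := by
    rw [hy, map_sub, map_sub, smul_sub, smul_sub, sub_add_sub_comm, hx, hEx]
  have hn : ‖y‖ ≤ t * ‖P₁ y‖ + (1 - t) * ‖P₂ y‖ := by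
    have h := norm_add_le (t • P₁ y) ((1 - t) • P₂ y)
    rwa [hPy, norm_smul, norm_smul, Real.norm_of_nonneg ht0.le,
      Real.norm_of_nonneg (sub_nonneg.2 ht1)] at h
  have h1 := mul_le_mul_of_nonneg_left (hP₁ y hy0) ht0.le
  have h2 := mul_le_mul_of_nonneg_left (hP₂ y) (sub_nonneg.2 ht1)
  have h3 : (t * δ) * ‖y‖ ≤ 0 := by linarith
  have h4 : ‖y‖ ≤ 0 := nonpos_of_mul_nonpos_right h3 (mul_pos ht0 hδ)
  have h5 : x - E x = 0 := hy ▸ norm_le_zero_iff.1 h4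
  exact (sub_eq_zero.1 h5).symm
end

section
/- Let G be a compact Hausdorff topological group, ν a Borel probability measure on G with full support (every nonempty open subset of G has positive ν-measure), H a nonzero finite-dimensional complex Hilbert space, and U : G → U(H) a continuous unitary representation of G on H that has no nonzero invariant vectors (there is no ξ ≠ 0 with U(g)ξ = ξ for all g ∈ G). Then the operator norm of the average ∫_G U(g) dν(g) is strictly less than 1. -/
open MeasureTheory

/-- If `ν` is a fully supported Borel probability measure on a compact group
`G` and `U` is a continuous finite-dimensional unitary representation of `G`
with no nonzero invariant vectors, then `‖∫ U(g) dν(g)‖ < 1`. -/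
theorem norm_average_lt_one_of_no_invariant_vectors
    {G : Type*} [Group G] [TopologicalSpace G] [IsTopologicalGroup G]
    [CompactSpace G] [T2Space G] [MeasurableSpace G] [BorelSpace G]
    (ν : Measure G) [IsProbabilityMeasure ν]
    (hν : ∀ s : Set G, IsOpen s → s.Nonempty → 0 < ν s)
    {H : Type*} [NormedAddCommGroup H] [InnerProductSpace ℂ H]
    [FiniteDimensional ℂ H] [Nontrivial H]
    (U : G →* (H →L[ℂ] H))
    (hU_unitary : ∀ g : G, U g ∈ unitary (H →L[ℂ] H))
    (hU_cont : Continuous fun g : G => U g)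
    (hU_noinv : ∀ ξ : H, (∀ g : G, U g ξ = ξ) → ξ = 0) :
    ‖∫ g, U g ∂ν‖ < 1 := by
  have : ProperSpace H := FiniteDimensional.proper ℂ H
  have : ν.IsOpenPosMeasure := ⟨fun s hs hne => (hν s hs hne).ne'⟩
  letI : NormedSpace ℝ H := NormedSpace.restrictScalars ℝ ℂ H
  letI : InnerProductSpace ℝ H := InnerProductSpace.rclikeToReal ℂ H
  have hint : Integrable (fun g => U g) ν :=
    hU_cont.integrable_of_hasCompactSupport (HasCompactSupport.of_compactSpace _)
  have key : ∀ ξ : H, ‖ξ‖ = 1 → ‖(∫ g, U g ∂ν) ξ‖ < 1 := by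
    intro ξ hξ
    rw [ContinuousLinearMap.integral_apply hint]
    have hnorm : ∀ g, ‖U g ξ‖ = 1 := fun g => by
      rw [ContinuousLinearMap.norm_map_of_mem_unitary (hU_unitary g), hξ]
    have hc : Continuous fun g => U g ξ := hU_cont.clm_apply continuous_const
    rcases ae_eq_const_or_norm_integral_lt_of_norm_le_const (μ := ν)
      (f := fun g => U g ξ) (C := 1) (Filter.Eventually.of_forall fun g => (hnorm g).le) with h | h
    · exfalso
      have h2 := (Continuous.ae_eq_iff_eq ν hc continuous_const).1 h
      have h0 : ξ = 0 := hU_noinv ξ fun g => by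
        have a := congrFun h2 g
        have b := congrFun h2 1
        simp only [map_one, ContinuousLinearMap.one_apply, Function.const] at a b
        rw [a, ← b]
      simp [h0] at hξ
    · simpa using h
  obtain ⟨v, hv⟩ := exists_ne (0 : H)
  have hne : (Metric.sphere (0 : H) 1).Nonempty := by
    refine ⟨((‖v‖⁻¹ : ℝ) : ℂ) • v, ?_⟩
    simp [norm_smul, hv]
  obtain ⟨x, hx, hmax⟩ := (isCompact_sphere (0 : H) 1).exists_isMaxOn hne
    ((∫ g, U g ∂ν).continuous.norm.continuousOn)
  refine lt_of_le_of_lt ?_ (key x (by simpa using hx))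
  refine ContinuousLinearMap.opNorm_le_of_unit_norm (𝕜 := ℂ) (norm_nonneg _) fun z hz => ?_
  exact hmax (by simpa using hz : z ∈ Metric.sphere (0 : H) 1)
end

section
/- Let G be a compact Hausdorff topological group with normalized Haar measure h, acting continuously on a compact Hausdorff space X. Let E : C(X,ℝ) → C(X,ℝ) be the G-invariant conditional expectation E(f)(x) = ∫_G f(g·x) dh(g). Let ν be a Borel probability measure on G with full support, and let P₁(f)(x) = ∫_G f(g·x) dν(g). Let P₂ : C(X,ℝ) → C(X,ℝ) be a positive unital bounded linear operator (f ≥ 0 implies P₂ f ≥ 0, and P₂ 1 = 1) that commutes with E, and let 0 < t < 1 and P = t·P₁ + (1−t)·P₂. Then every f ∈ C(X,ℝ) with P f = f is G-invariant: f(g·x) = f(x) for all g ∈ G and x ∈ X. -/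
open MeasureTheory

theorem aux_right_inv {G : Type*} [Group G] [TopologicalSpace G] [IsTopologicalGroup G]
    [CompactSpace G] [MeasurableSpace G] [BorelSpace G]
    (h : Measure G) [IsProbabilityMeasure h] [h.IsMulLeftInvariant]
    (φ : G → ℝ) (hφ : Continuous φ) (a : G) : ∫ g, φ (g * a) ∂h = ∫ g, φ g ∂h := by
  have hm : AEMeasurable (fun g : G => g * a) h := (continuous_mul_const a).measurable.aemeasurable
  haveI : h.IsHaarMeasure := Measure.isHaarMeasure_of_isCompact_nonempty_interior h Set.univ
    isCompact_univ (by simp) (by simp) (by simp)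
  haveI : IsProbabilityMeasure (h.map (· * a)) := Measure.isProbabilityMeasure_map hm
  have key : ∀ ψ : G → ℝ, Continuous ψ → ∫ g, ψ (g * a) ∂h =
      (Measure.haarScalarFactor (h.map (· * a)) h : ℝ) * ∫ g, ψ g ∂h := by
    intro ψ hψ
    have := Measure.integral_isMulLeftInvariant_eq_smul_of_hasCompactSupport (h.map (· * a)) h hψ
      (HasCompactSupport.of_compactSpace ψ)
    rw [integral_map hm hψ.aestronglyMeasurable, integral_smul_nnreal_measure] at this
    exact this
  have h1 := key (fun _ => 1) continuous_const
  simp at h1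
  rw [key φ hφ, ← h1]
  simp

/-- Commutative case of the proposition on harmonic elements for actions of
compact (quantum) groups: let a compact group `G` with Haar probability
measure `h` act continuously on a compact Hausdorff space `X`, let
`E f x = ∫ f(g·x) dh(g)` be the invariant conditional expectation, let
`P₁ f x = ∫ f(g·x) dν(g)` for a fully supported Borel probability measure `ν`,
and let `P₂` be a positive unital bounded operator commuting with `E`. Then
every fixed point of `P = t P₁ + (1-t) P₂`, `0 < t < 1`, is `G`-invariant. -/
theorem harmonic_is_invariant_compact_group_action
    {G X : Type*} [Group G] [TopologicalSpace G] [IsTopologicalGroup G]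
    [CompactSpace G] [T2Space G] [MeasurableSpace G] [BorelSpace G]
    [TopologicalSpace X] [CompactSpace X] [T2Space X]
    [MulAction G X] [ContinuousSMul G X]
    (h : Measure G) [IsProbabilityMeasure h] [h.IsMulLeftInvariant]
    (ν : Measure G) [IsProbabilityMeasure ν]
    (hν : ∀ s : Set G, IsOpen s → s.Nonempty → 0 < ν s)
    (E P₁ P₂ : C(X, ℝ) →L[ℝ] C(X, ℝ))
    (hE : ∀ (f : C(X, ℝ)) (x : X), E f x = ∫ g, f (g • x) ∂h)
    (hP₁ : ∀ (f : C(X, ℝ)) (x : X), P₁ f x = ∫ g, f (g • x) ∂ν)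
    (hP₂_pos : ∀ f : C(X, ℝ), (∀ x, 0 ≤ f x) → ∀ x, 0 ≤ P₂ f x)
    (hP₂_one : P₂ 1 = 1)
    (hcomm : ∀ f : C(X, ℝ), P₂ (E f) = E (P₂ f))
    (t : ℝ) (ht0 : 0 < t) (ht1 : t < 1)
    (f : C(X, ℝ)) (hf : t • P₁ f + (1 - t) • P₂ f = f) :
    ∀ (g : G) (x : X), f (g • x) = f x := by
  have hc : ∀ (u : C(X, ℝ)) (x : X), Continuous (fun g : G => u (g • x)) := fun u x =>
    u.continuous.comp (continuous_id.smul continuous_const)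
  have hint : ∀ (μ : Measure G) [IsProbabilityMeasure μ] (u : C(X, ℝ)) (x : X),
      Integrable (fun g : G => u (g • x)) μ := fun μ _ u x =>
    (hc u x).integrable_of_hasCompactSupport (HasCompactSupport.of_compactSpace _)
  haveI : ν.IsOpenPosMeasure := ⟨fun s hs hne => (hν s hs hne).ne'⟩
  have hEinv : ∀ (u : C(X, ℝ)) (g : G) (x : X), E u (g • x) = E u x := by
    intro u g x
    rw [hE, hE, ← aux_right_inv h (fun k => u (k • x)) (hc u x) g]
    simp only [mul_smul]
  have hEE : ∀ u, E (E u) = E u := by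
    intro u; ext x; rw [hE (E u)]; simp [hEinv]
  have hP₁E : ∀ u, P₁ (E u) = E u := by
    intro u; ext x; rw [hP₁ (E u)]; simp [hEinv]
  have hEP₁ : ∀ u, E (P₁ u) = E u := by
    intro u
    ext x
    rw [hE (P₁ u)]
    simp only [hP₁]
    rw [integral_integral_swap_of_hasCompactSupport (f := fun k g : G => u (g • k • x))
      (u.continuous.comp (continuous_snd.smul (continuous_fst.smul continuous_const)))
      (HasCompactSupport.of_compactSpace _)]
    have : ∀ g : G, ∫ k, u (g • k • x) ∂h = E u x := by
      intro g
      rw [hE, ← integral_mul_left_eq_self (fun k => u (k • x)) g]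
      simp only [mul_smul]
    simp [this]
  have key : ∀ d : C(X, ℝ), t • P₁ d + (1 - t) • P₂ d = d → E d = 0 → ∀ x, d x ≤ 0 := by
    intro d hd hEd x
    haveI : Nonempty X := ⟨x⟩
    obtain ⟨x0, -, hx0⟩ := isCompact_univ.exists_isMaxOn Set.univ_nonempty d.continuous.continuousOn
    have hmax : ∀ y, d y ≤ d x0 := fun y => hx0 (Set.mem_univ y)
    have h2 : P₂ d x0 ≤ d x0 := by
      have := hP₂_pos (d x0 • (1 : C(X, ℝ)) - d) (fun y => by simpa using hmax y) x0
      rw [map_sub, map_smul, hP₂_one] at this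
      simpa using this
    have h0 : t * P₁ d x0 + (1 - t) * P₂ d x0 = d x0 := by
      simpa using congrArg (fun u : C(X, ℝ) => u x0) hd
    have h1 : d x0 ≤ P₁ d x0 := by
      by_contra! hlt
      nlinarith [mul_lt_mul_of_pos_left hlt ht0,
        mul_le_mul_of_nonneg_left h2 (sub_pos.2 ht1).le]
    have hconst : ∀ g : G, d (g • x0) = d x0 := by
      intro g
      by_contra hne
      have := Continuous.integral_pos_of_hasCompactSupport_nonneg_nonzero (μ := ν)
        (f := fun g : G => d x0 - d (g • x0)) (x := g) (continuous_const.sub (hc d x0))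
        (HasCompactSupport.of_compactSpace _) (fun k => sub_nonneg.2 (hmax _))
        (sub_ne_zero.2 (Ne.symm hne))
      rw [integral_sub (integrable_const _) (hint ν d x0), ← hP₁] at this
      simp at this
      linarith
    have h3 : E d x0 = d x0 := by rw [hE]; simp [hconst]
    rw [hEd] at h3
    have h4 := hmax x
    rw [← h3] at h4
    simpa using h4
  have hPE : t • E f + (1 - t) • P₂ (E f) = E f := by
    have := congrArg E hf
    rw [map_add, map_smul, map_smul, hEP₁, ← hcomm] at this
    exact this
  have hd1 : t • P₁ (f - E f) + (1 - t) • P₂ (f - E f) = f - E f := by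
    rw [map_sub, map_sub, hP₁E, smul_sub, smul_sub]
    calc _ = (t • P₁ f + (1 - t) • P₂ f) - (t • E f + (1 - t) • P₂ (E f)) := by abel
      _ = _ := by rw [hf, hPE]
  have hd2 : E (f - E f) = 0 := by rw [map_sub, hEE, sub_self]
  have hle := key _ hd1 hd2
  have hge := key (-(f - E f)) (by
    rw [map_neg, map_neg, smul_neg, smul_neg, ← neg_add, hd1]) (by rw [map_neg, hd2, neg_zero])
  have hfE : ∀ x, f x = E f x := by
    intro x
    have a := hle x
    have b := hge x
    simp at a b
    linarith
  intro g x
  rw [hfE, hEinv, ← hfE]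
end

section
/- Let Γ be a countable discrete group, N a finite normal subgroup, and μ a finitely supported, generating, transient probability measure on Γ with Green function G and Martin kernel K(x,y) = G(yx⁻¹)/G(y). Then the Martin kernel is asymptotically N-invariant: for every x ∈ Γ and every g ∈ N, the function y ↦ K(g·x, y) − K(x, y) vanishes at infinity, i.e. tends to 0 along the cofinite filter on Γ. -/
/-- A measure `μ` is transient if its Green function `∑_n μ^{*n}(x)` is finite
(i.e. the series is summable) at every point. -/
def IsTransient {G : Type*} [Group G] (μ : G → ℝ) : Prop :=
  ∀ x : G, Summable fun n => convPow μ n x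

/-- The Green function `G(x) = ∑_{n ≥ 0} μ^{*n}(x)`. -/
noncomputable def greenFn {G : Type*} [Group G] (μ : G → ℝ) : G → ℝ :=
  fun x => ∑' n, convPow μ n x

/-- The Martin kernel `K(x, y) = G(y x⁻¹) / G(y)`. -/
noncomputable def martinKernel {G : Type*} [Group G] (μ : G → ℝ) (x y : G) : ℝ :=
  greenFn μ (y * x⁻¹) / greenFn μ y

open Filter in
theorem mk_core {Γ : Type*} [Group Γ] (N : Subgroup Γ) [N.Normal] (M T : Finset Γ)
    (hM : ∀ x, x ∈ M ↔ x ∈ N) (hMT : M ⊆ T) (F σ : Γ → ℝ) (hF : ∀ x, 0 ≤ F x)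
    (ε : ℝ) (hε : 0 < ε) (hσ0 : ∀ s, 0 ≤ σ s) (hσ : ∀ s ∈ M, ε ≤ σ s) (hσ1 : ∑ s ∈ T, σ s = 1)
    (hharm : ∀ᶠ z in cofinite, F z = ∑ s ∈ T, σ s * F (z * s⁻¹)) :
    ∃ q : ℝ, 0 ≤ q ∧ q < 1 ∧ ∀ k : ℕ, ∀ᶠ z in cofinite, ∀ g ∈ M,
      |F (z * g) - F z| ≤ q ^ k * ∑ u ∈ M, F (z * u) := by
  classical
  have hshift : ∀ (p : Γ → Prop) (t : Γ), (∀ᶠ z in cofinite, p z) → ∀ᶠ z in cofinite, p (z * t) := by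
    intro p t h
    exact (mul_left_injective t).tendsto_cofinite.eventually h
  set A : Γ → ℝ := fun z => ∑ u ∈ M, F (z * u) with hA
  have hA0 : ∀ z, 0 ≤ A z := fun z => Finset.sum_nonneg fun u _ => hF _
  have hAinv : ∀ z, ∀ g ∈ M, A (z * g) = A z := by
    intro z g hg
    refine Finset.sum_equiv (Equiv.mulLeft g) ?_ ?_
    · intro i
      simp only [hM, Equiv.coe_mulLeft]
      exact (N.mul_mem_cancel_left ((hM g).1 hg)).symm
    · intro i _; simp [mul_assoc]
  have hAinv' : ∀ z, ∑ u ∈ M, F (z * u⁻¹) = A z := by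
    intro z
    refine Finset.sum_equiv (Equiv.inv Γ) ?_ ?_
    · intro i; simp [hM]
    · intro i _; simp
  have hAconj : ∀ z s, ∑ u ∈ M, F (z * u * s⁻¹) = A (z * s⁻¹) := by
    intro z s
    refine Finset.sum_equiv (MulAut.conj s).toEquiv ?_ ?_
    · intro i
      simp only [hM, MulEquiv.toEquiv_eq_coe, EquivLike.coe_coe, MulAut.conj_apply]
      refine ⟨fun h => ‹N.Normal›.conj_mem i h s, fun h => ?_⟩
      have h' := ‹N.Normal›.conj_mem _ h s⁻¹
      have e : s⁻¹ * (s * i * s⁻¹) * s⁻¹⁻¹ = i := by group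
      rwa [e] at h'
    · intro i _; simp [mul_assoc]
  set τ : Γ → ℝ := fun s => σ s - if s ∈ M then ε else 0 with hτ
  have hτ0 : ∀ s, 0 ≤ τ s := by
    intro s
    by_cases h : s ∈ M
    · simpa [hτ, h] using hσ s h
    · simpa [hτ, h] using hσ0 s
  have hsplit : ∀ φ : Γ → ℝ, ∑ s ∈ T, σ s * φ s = ∑ s ∈ T, τ s * φ s + ε * ∑ s ∈ M, φ s := by
    intro φ
    have : ε * ∑ s ∈ M, φ s = ∑ s ∈ T, (if s ∈ M then ε else 0) * φ s := by
      rw [Finset.mul_sum, ← Finset.sum_subset hMT]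
      · exact Finset.sum_congr rfl fun s hs => by simp [hs]
      · intro s _ hs; simp [hs]
    rw [this, ← Finset.sum_add_distrib]
    exact Finset.sum_congr rfl fun s _ => by simp only [hτ]; ring
  have hq := hsplit (fun _ => 1)
  simp only [mul_one, hσ1, Finset.sum_const, nsmul_eq_mul] at hq
  have hMpos : (0 : ℝ) < M.card := by
    exact_mod_cast Finset.card_pos.2 ⟨1, (hM 1).2 N.one_mem⟩
  refine ⟨∑ s ∈ T, τ s, Finset.sum_nonneg fun s _ => hτ0 s, by nlinarith [mul_pos hε hMpos], ?_⟩
  set q := ∑ s ∈ T, τ s with hqdef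
  have hAharm : ∀ᶠ z in cofinite, ∑ s ∈ T, τ s * A (z * s⁻¹) = q * A z := by
    have h1 : ∀ᶠ z in cofinite, ∀ u ∈ M, F (z * u) = ∑ s ∈ T, σ s * F (z * u * s⁻¹) := by
      rw [Finset.eventually_all]
      intro u _
      exact hshift (fun z => F z = ∑ s ∈ T, σ s * F (z * s⁻¹)) u hharm
    filter_upwards [h1] with z hz
    have h2 : A z = ∑ s ∈ T, σ s * A (z * s⁻¹) := by
      calc A z = ∑ u ∈ M, ∑ s ∈ T, σ s * F (z * u * s⁻¹) := Finset.sum_congr rfl hz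
        _ = ∑ s ∈ T, ∑ u ∈ M, σ s * F (z * u * s⁻¹) := Finset.sum_comm
        _ = _ := Finset.sum_congr rfl fun s _ => by rw [← Finset.mul_sum, hAconj]
    have h3 := hsplit (fun s => A (z * s⁻¹))
    have h4 : ∑ s ∈ M, A (z * s⁻¹) = M.card * A z := by
      rw [Finset.sum_congr rfl fun s hs => hAinv z s⁻¹ ((hM _).2 (N.inv_mem ((hM s).1 hs)))]
      simp
    simp only [h4] at h3
    have : q = 1 - M.card * ε := by linarith
    rw [this]; linarith
  intro k
  induction k with
  | zero =>
    refine Eventually.of_forall fun z g hg => ?_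
    have a1 : F (z * g) ≤ A z := Finset.single_le_sum (f := fun u => F (z * u)) (fun u _ => hF _) hg
    have a2 : F z ≤ A z := by
      have := Finset.single_le_sum (f := fun u => F (z * u)) (fun u _ => hF _) ((hM 1).2 N.one_mem)
      simpa using this
    rw [pow_zero, one_mul, abs_le]
    constructor <;> linarith [hF z, hF (z * g)]
  | succ k ih =>
    have h1 : ∀ᶠ z in cofinite, ∀ s ∈ T, ∀ g ∈ M,
        |F (z * s⁻¹ * g) - F (z * s⁻¹)| ≤ q ^ k * A (z * s⁻¹) := by
      rw [Finset.eventually_all]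
      intro s _
      exact hshift (fun z => ∀ g ∈ M, |F (z * g) - F z| ≤ q ^ k * A z) s⁻¹ ih
    have h2 : ∀ᶠ z in cofinite, ∀ u ∈ M, F (z * u) = ∑ s ∈ T, σ s * F (z * u * s⁻¹) := by
      rw [Finset.eventually_all]
      intro u _
      exact hshift (fun z => F z = ∑ s ∈ T, σ s * F (z * s⁻¹)) u hharm
    filter_upwards [h1, h2, hharm, hAharm] with z z1 z2 z3 z4 g hg
    rw [z2 g hg, z3, hsplit (fun s => F (z * g * s⁻¹)), hsplit (fun s => F (z * s⁻¹)), hAinv', hAinv',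
      hAinv z g hg, add_sub_add_right_eq_sub, ← Finset.sum_sub_distrib]
    calc |∑ s ∈ T, (τ s * F (z * g * s⁻¹) - τ s * F (z * s⁻¹))|
        ≤ ∑ s ∈ T, |τ s * F (z * g * s⁻¹) - τ s * F (z * s⁻¹)| := Finset.abs_sum_le_sum_abs _ _
      _ ≤ ∑ s ∈ T, q ^ k * (τ s * A (z * s⁻¹)) := by
        refine Finset.sum_le_sum fun s hs => ?_
        rw [← mul_sub, abs_mul, abs_of_nonneg (hτ0 s)]
        have := z1 s hs (s * g * s⁻¹) ((hM _).2 (‹N.Normal›.conj_mem g ((hM g).1 hg) s))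
        have e : z * s⁻¹ * (s * g * s⁻¹) = z * g * s⁻¹ := by group
        rw [e] at this
        calc _ ≤ τ s * (q ^ k * A (z * s⁻¹)) := mul_le_mul_of_nonneg_left this (hτ0 s)
          _ = _ := by ring
      _ = q ^ (k + 1) * A z := by rw [← Finset.mul_sum, z4]; ring

theorem mk_succ {Γ : Type*} [Group Γ] (μ : Γ → ℝ) (S : Finset Γ) (hS : ∀ s, s ∉ S → μ s = 0)
    (n : ℕ) (z : Γ) : convPow μ (n + 1) z = ∑ s ∈ S, convPow μ n (z * s⁻¹) * μ s := by
  show ∑' y, convPow μ n y * μ (y⁻¹ * z) = _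
  rw [← ((Equiv.inv Γ).trans (Equiv.mulLeft z)).tsum_eq]
  simp only [Equiv.trans_apply, Equiv.inv_apply, Equiv.coe_mulLeft]
  rw [tsum_eq_sum (s := S)]
  · exact Finset.sum_congr rfl fun s _ => by congr 2; group
  · intro s hs
    have : (z * s⁻¹)⁻¹ * z = s := by group
    rw [this, hS s hs, mul_zero]

theorem mk_nonneg {Γ : Type*} [Group Γ] (μ : Γ → ℝ) (h0 : ∀ x, 0 ≤ μ x) (n : ℕ) (z : Γ) :
    0 ≤ convPow μ n z := by
  induction n generalizing z with
  | zero => exact Set.indicator_nonneg (fun _ _ => zero_le_one) z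
  | succ n ih => exact tsum_nonneg fun y => mul_nonneg (ih y) (h0 _)

theorem mk_supp {Γ : Type*} [Group Γ] (μ : Γ → ℝ) (S : Finset Γ) (hS : ∀ s, s ∉ S → μ s = 0)
    (n : ℕ) : (Function.support (convPow μ n)).Finite := by
  induction n with
  | zero =>
    refine (Set.finite_singleton (1 : Γ)).subset ?_
    exact Set.support_indicator_subset
  | succ n ih =>
    refine (Set.Finite.biUnion S.finite_toSet
      (fun s _ => ih.image (fun y => y * s))).subset ?_
    intro z hz
    rw [Function.mem_support, mk_succ μ S hS] at hz
    obtain ⟨s, hs, h⟩ := Finset.exists_ne_zero_of_sum_ne_zero hz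
    simp only [Set.mem_iUnion]
    exact ⟨s, hs, z * s⁻¹, left_ne_zero_of_mul h, by simp⟩

theorem mk_smb {Γ : Type*} [Group Γ] (μ : Γ → ℝ) (S : Finset Γ) (hS : ∀ s, s ∉ S → μ s = 0)
    (n : ℕ) (φ : Γ → ℝ) : Summable fun s => convPow μ n s * φ s := by
  apply summable_of_hasFiniteSupport
  exact (mk_supp μ S hS n).subset fun x hx => left_ne_zero_of_mul hx

theorem mk_test {Γ : Type*} [Group Γ] (μ : Γ → ℝ) (S : Finset Γ) (hS : ∀ s, s ∉ S → μ s = 0)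
    (n : ℕ) (φ : Γ → ℝ) : ∑' s, convPow μ (n + 1) s * φ s =
      ∑ t ∈ S, μ t * ∑' s, convPow μ n s * φ (s * t) := by
  have key : ∀ t, Summable fun s => convPow μ n (s * t⁻¹) * μ t * φ s := by
    intro t
    rw [← (Equiv.mulRight t).summable_iff]
    refine (mk_smb μ S hS n (fun s => μ t * φ (s * t))).congr fun s => ?_
    simp [mul_assoc]
  simp_rw [mk_succ μ S hS, Finset.sum_mul]
  rw [Summable.tsum_finsetSum fun t _ => key t]
  refine Finset.sum_congr rfl fun t _ => ?_
  rw [← (Equiv.mulRight t).tsum_eq, ← tsum_mul_left]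
  refine tsum_congr fun s => ?_
  simp only [Equiv.coe_mulRight, mul_inv_cancel_right]
  ring

theorem mk_zero {Γ : Type*} [Group Γ] (μ : Γ → ℝ) (φ : Γ → ℝ) :
    ∑' s, convPow μ 0 s * φ s = φ 1 := by
  rw [tsum_eq_single 1]
  · simp [convPow]
  · intro b hb; simp [convPow, hb]

theorem mk_mass {Γ : Type*} [Group Γ] (μ : Γ → ℝ) (S : Finset Γ) (hS : ∀ s, s ∉ S → μ s = 0)
    (h1 : ∑ s ∈ S, μ s = 1) (n : ℕ) : ∑' s, convPow μ n s * 1 = 1 := by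
  induction n with
  | zero => exact mk_zero μ (fun _ => 1)
  | succ n ih => rw [mk_test μ S hS n (fun _ => 1)]; simp only [ih]; simpa using h1

theorem mk_green {Γ : Type*} [Group Γ] (μ : Γ → ℝ) (S : Finset Γ) (hS : ∀ s, s ∉ S → μ s = 0)
    (ht : IsTransient μ) (z : Γ) :
    greenFn μ z = convPow μ 0 z + ∑ s ∈ S, μ s * greenFn μ (z * s⁻¹) := by
  unfold greenFn
  rw [(ht z).tsum_eq_zero_add]
  congr 1
  simp_rw [mk_succ μ S hS]
  rw [Summable.tsum_finsetSum fun s _ => (ht (z * s⁻¹)).mul_right (μ s)]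
  exact Finset.sum_congr rfl fun s _ => by rw [tsum_mul_right, mul_comm]

theorem mk_super {Γ : Type*} [Group Γ] (μ : Γ → ℝ) (h0 : ∀ x, 0 ≤ μ x)
    (S : Finset Γ) (hS : ∀ s, s ∉ S → μ s = 0)
    (ht : IsTransient μ) (n : ℕ) (z : Γ) :
    ∑' s, convPow μ n s * greenFn μ (z * s⁻¹) ≤ greenFn μ z := by
  induction n generalizing z with
  | zero => rw [mk_zero μ (fun s => greenFn μ (z * s⁻¹))]; simp
  | succ n ih =>
    rw [mk_test μ S hS n (fun s => greenFn μ (z * s⁻¹)), mk_green μ S hS ht z]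
    refine le_add_of_nonneg_of_le (mk_nonneg μ h0 0 z) ?_
    refine Finset.sum_le_sum fun t _ => mul_le_mul_of_nonneg_left ?_ (h0 t)
    simpa [mul_assoc] using ih (z * t⁻¹)

theorem mk_harm {Γ : Type*} [Group Γ] (μ : Γ → ℝ)
    (S : Finset Γ) (hS : ∀ s, s ∉ S → μ s = 0)
    (ht : IsTransient μ) (n : ℕ) : ∀ᶠ z in Filter.cofinite,
    greenFn μ z = ∑' s, convPow μ n s * greenFn μ (z * s⁻¹) := by
  induction n with
  | zero =>
    refine Filter.Eventually.of_forall fun z => ?_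
    rw [mk_zero μ (fun s => greenFn μ (z * s⁻¹))]; simp
  | succ n ih =>
    have h1 : ∀ᶠ z in Filter.cofinite, ∀ t ∈ S, greenFn μ (z * t⁻¹) =
        ∑' s, convPow μ n s * greenFn μ (z * t⁻¹ * s⁻¹) := by
      rw [Finset.eventually_all]
      intro t _
      exact (mul_left_injective t⁻¹).tendsto_cofinite.eventually ih
    have h2 : ∀ᶠ z : Γ in Filter.cofinite, z ≠ 1 := by
      simp [Filter.eventually_cofinite]
    filter_upwards [h1, h2] with z z1 z2
    rw [mk_test μ S hS n (fun s => greenFn μ (z * s⁻¹)), mk_green μ S hS ht z]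
    have : convPow μ 0 z = 0 := by simp [convPow, z2]
    rw [this, zero_add]
    refine Finset.sum_congr rfl fun t htS => ?_
    rw [z1 t htS]
    simp [mul_assoc]

/-- For a finitely supported, generating, transient probability measure `μ` on
a countable group `Γ` with finite normal subgroup `N`, the Martin kernel is
asymptotically `N`-invariant: for every `x ∈ Γ` and `g ∈ N`, the function
`y ↦ K(g x, y) - K(x, y)` vanishes at infinity. -/
theorem martin_kernel_asymptotically_invariant
    {Γ : Type*} [Group Γ] [Countable Γ]
    (N : Subgroup Γ) [N.Normal] [Finite N]
    (μ : Γ → ℝ) (hμ0 : ∀ x, 0 ≤ μ x) (hμ1 : HasSum μ 1)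
    (hfin : (Function.support μ).Finite)
    (hgen : IsGenerating μ) (htrans : IsTransient μ) :
    ∀ x : Γ, ∀ g ∈ N,
      Filter.Tendsto (fun y : Γ => martinKernel μ (g * x) y - martinKernel μ x y)
        Filter.cofinite (nhds 0) := by
  classical
  set S := hfin.toFinset with hSdef
  have hS : ∀ s, s ∉ S → μ s = 0 := by intro s hs; simpa [hSdef] using hs
  have h1 : ∑ s ∈ S, μ s = 1 := by
    rw [← hμ1.tsum_eq, tsum_eq_sum (s := S)]
    exact fun b hb => hS b hb
  have hF0 : ∀ x, 0 ≤ greenFn μ x := fun x => tsum_nonneg fun n => mk_nonneg μ hμ0 n x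
  have hFpos : ∀ x, 0 < greenFn μ x := by
    intro x
    obtain ⟨n, _, hn⟩ := hgen x
    exact (htrans x).tsum_pos (fun n => mk_nonneg μ hμ0 n x) n hn
  have hHar : ∀ v : Γ, ∃ C : ℝ, 0 ≤ C ∧ ∀ w, greenFn μ w ≤ C * greenFn μ (w * v) := by
    intro v
    obtain ⟨n, _, hn⟩ := hgen v
    refine ⟨(convPow μ n v)⁻¹, (inv_pos.2 hn).le, fun w => ?_⟩
    rw [← div_eq_inv_mul, le_div_iff₀ hn, mul_comm]
    refine le_trans ?_ (mk_super μ hμ0 S hS htrans n (w * v))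
    have := (mk_smb μ S hS n (fun s => greenFn μ (w * v * s⁻¹))).le_tsum v
      (fun s _ => mul_nonneg (mk_nonneg μ hμ0 n s) (hF0 _))
    simpa using this
  choose C hC0 hC using hHar
  choose n hn1 hn using hgen
  set M : Finset Γ := (Set.toFinite (N : Set Γ)).toFinset with hMdef
  have hM : ∀ x, x ∈ M ↔ x ∈ N := by intro x; simp [hMdef]
  have hMpos : (0 : ℝ) < M.card := by
    exact_mod_cast Finset.card_pos.2 ⟨1, (hM 1).2 N.one_mem⟩
  set T : Finset Γ := M ∪ M.biUnion fun u => (mk_supp μ S hS (n u)).toFinset with hT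
  have hT0 : ∀ u ∈ M, ∀ s, s ∉ T → convPow μ (n u) s = 0 := by
    intro u hu s hs
    by_contra h
    exact hs (Finset.mem_union_right _ (Finset.mem_biUnion.2 ⟨u, hu, by simpa using h⟩))
  have hTsum : ∀ u ∈ M, ∀ φ : Γ → ℝ, ∑' s, convPow μ (n u) s * φ s =
      ∑ s ∈ T, convPow μ (n u) s * φ s := by
    intro u hu φ
    exact tsum_eq_sum fun s hs => by rw [hT0 u hu s hs, zero_mul]
  set σ : Γ → ℝ := fun s => (M.card : ℝ)⁻¹ * ∑ u ∈ M, convPow μ (n u) s with hσ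
  have hσsum : ∀ φ : Γ → ℝ, ∑ s ∈ T, σ s * φ s =
      (M.card : ℝ)⁻¹ * ∑ u ∈ M, ∑' s, convPow μ (n u) s * φ s := by
    intro φ
    rw [Finset.sum_congr rfl fun u hu => hTsum u hu φ, Finset.sum_comm, Finset.mul_sum]
    refine Finset.sum_congr rfl fun s _ => ?_
    simp only [hσ, Finset.sum_mul, mul_assoc]
  have hσ0 : ∀ s, 0 ≤ σ s := fun s =>
    mul_nonneg (inv_pos.2 hMpos).le (Finset.sum_nonneg fun u _ => mk_nonneg μ hμ0 _ s)
  have hσpos : ∀ s ∈ M, 0 < σ s := by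
    intro s hs
    refine mul_pos (inv_pos.2 hMpos) ?_
    exact Finset.sum_pos' (fun u _ => mk_nonneg μ hμ0 _ s) ⟨s, hs, hn s⟩
  obtain ⟨m, hm, hmin⟩ := Finset.exists_min_image M σ ⟨1, (hM 1).2 N.one_mem⟩
  have hσ1 : ∑ s ∈ T, σ s = 1 := by
    have := hσsum (fun _ => 1)
    rw [Finset.sum_congr rfl fun u _ => mk_mass μ S hS h1 (n u)] at this
    simpa [hMpos.ne'] using this
  have hharm : ∀ᶠ z in Filter.cofinite,
      greenFn μ z = ∑ s ∈ T, σ s * greenFn μ (z * s⁻¹) := by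
    have : ∀ᶠ z in Filter.cofinite, ∀ u ∈ M,
        greenFn μ z = ∑' s, convPow μ (n u) s * greenFn μ (z * s⁻¹) := by
      rw [Finset.eventually_all]
      exact fun u _ => mk_harm μ S hS htrans (n u)
    filter_upwards [this] with z hz
    rw [hσsum (fun s => greenFn μ (z * s⁻¹)), ← Finset.sum_congr rfl hz, Finset.sum_const,
      nsmul_eq_mul, inv_mul_cancel_left₀ hMpos.ne']
  obtain ⟨q, hq0, hq1, hq⟩ := mk_core N M T hM Finset.subset_union_left (greenFn μ) σ hF0
    (σ m) (hσpos m hm) hσ0 hmin hσ1 hharm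
  intro x g hg
  set B : ℝ := ∑ u ∈ M, C (u⁻¹ * x) with hB
  have hB0 : 0 ≤ B := Finset.sum_nonneg fun u _ => hC0 _
  rw [Metric.tendsto_nhds]
  intro δ hδ
  have hlim : Filter.Tendsto (fun k : ℕ => q ^ k * B) Filter.atTop (nhds 0) := by
    simpa using (tendsto_pow_atTop_nhds_zero_of_lt_one hq0 hq1).mul_const B
  obtain ⟨k, hk⟩ := (hlim.eventually (gt_mem_nhds hδ)).exists
  have hev := (mul_left_injective x⁻¹).tendsto_cofinite.eventually (hq k)
  filter_upwards [hev] with y hy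
  have h := hy g⁻¹ ((hM _).2 (N.inv_mem hg))
  have hsum : ∑ u ∈ M, greenFn μ (y * x⁻¹ * u) ≤ B * greenFn μ y := by
    rw [hB, Finset.sum_mul]
    refine Finset.sum_le_sum fun u _ => ?_
    have := hC (u⁻¹ * x) (y * x⁻¹ * u)
    have e : y * x⁻¹ * u * (u⁻¹ * x) = y := by group
    rwa [e] at this
  rw [dist_zero_right, Real.norm_eq_abs]
  refine lt_of_le_of_lt ?_ hk
  have e : y * (g * x)⁻¹ = y * x⁻¹ * g⁻¹ := by group
  unfold martinKernel
  rw [e, ← sub_div, abs_div, abs_of_pos (hFpos y), div_le_iff₀ (hFpos y), mul_assoc (q ^ k)]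
  exact h.trans (mul_le_mul_of_nonneg_left hsum (pow_nonneg hq0 k))
end

section
/- Let Γ be a countable discrete group, N a finite normal subgroup, and μ a finitely supported, generating, transient probability measure on Γ with Green function G and Martin kernel K(x,y) = G(yx⁻¹)/G(y). If f : Γ → ℝ is a finitely supported function with ∑_{g∈N} f(g·x) = 0 for every x ∈ Γ, then the function y ↦ ∑_{x∈Γ} f(x)·K(x,y) vanishes at infinity, i.e. tends to 0 along the cofinite filter on Γ. -/
section aux

variable {Γ : Type*} [Group Γ]

lemma aux_pow_nonneg (μ : Γ → ℝ) (h0 : ∀ x, 0 ≤ μ x) (n : ℕ) (x : Γ) : 0 ≤ convPow μ n x := by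
  induction n generalizing x with
  | zero => exact Set.indicator_nonneg (fun _ _ => zero_le_one) x
  | succ n ih => exact tsum_nonneg fun y => mul_nonneg (ih y) (h0 _)

lemma aux_pow_succ (μ : Γ → ℝ) (hfin : (Function.support μ).Finite) (n : ℕ) (z : Γ) :
    convPow μ (n + 1) z = ∑ s ∈ hfin.toFinset, μ s * convPow μ n (z * s⁻¹) := by
  have h1 : convPow μ (n + 1) z = ∑' y, convPow μ n y * μ (y⁻¹ * z) := rfl
  rw [h1]
  let e : Γ ≃ Γ := (Equiv.inv Γ).trans (Equiv.mulLeft z)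
  rw [← e.tsum_eq]
  rw [tsum_eq_sum (s := hfin.toFinset)]
  · refine Finset.sum_congr rfl fun s _ => ?_
    simp [e, mul_comm]
  · intro s hs
    have : μ s = 0 := by simpa using hs
    simp [e, this]

lemma aux_green (μ : Γ → ℝ) (hfin : (Function.support μ).Finite) (ht : IsTransient μ) (z : Γ) :
    greenFn μ z = convPow μ 0 z + ∑ s ∈ hfin.toFinset, μ s * greenFn μ (z * s⁻¹) := by
  unfold greenFn
  rw [(ht z).tsum_eq_zero_add]
  congr 1
  simp_rw [aux_pow_succ μ hfin]
  rw [Summable.tsum_finsetSum (fun s _ => (ht _).mul_left _)]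
  simp_rw [tsum_mul_left]

lemma aux_harnack (μ : Γ → ℝ) (h0 : ∀ x, 0 ≤ μ x) (hgen : IsGenerating μ) (x : Γ) :
    ∃ C : ℝ, 0 ≤ C ∧ ∀ u : Γ → ℝ, (∀ w, 0 ≤ u w) → (∀ s w, μ s * u (s * w) ≤ u w) →
      ∀ w, u (x * w) ≤ C * u w := by
  obtain ⟨n, -, hn⟩ := hgen x
  induction n generalizing x with
  | zero =>
    have hx : x = 1 := by
      by_contra h
      simp [convPow, h] at hn
    subst hx
    exact ⟨1, zero_le_one, fun u _ _ w => by simp⟩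
  | succ n ih =>
    have : ∃ z, 0 < convPow μ n z ∧ 0 < μ (z⁻¹ * x) := by
      by_contra hcon
      push Not at hcon
      have h1 : convPow μ (n + 1) x = ∑' y, convPow μ n y * μ (y⁻¹ * x) := rfl
      have h2 : ∀ y, convPow μ n y * μ (y⁻¹ * x) = 0 := by
        intro y
        rcases (aux_pow_nonneg μ h0 n y).eq_or_lt with h | h
        · simp [← h]
        · rw [le_antisymm (hcon y h) (h0 _), mul_zero]
      simp [h1, h2] at hn
    obtain ⟨z, hz, hs⟩ := this
    obtain ⟨C, hC, H⟩ := ih z hz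
    refine ⟨C * (μ (z⁻¹ * x))⁻¹, by positivity, fun u hu hsup w => ?_⟩
    have e1 := H u hu hsup (z⁻¹ * x * w)
    have e2 := hsup (z⁻¹ * x) w
    have e3 : u (z⁻¹ * x * w) ≤ (μ (z⁻¹ * x))⁻¹ * u w := by
      rw [le_inv_mul_iff₀ hs]; exact e2
    have e4 : z * (z⁻¹ * x * w) = x * w := by group
    rw [e4] at e1
    rw [mul_assoc]
    exact e1.trans (mul_le_mul_of_nonneg_left e3 hC)

/-- Normalized nonnegative harmonic functions. -/
def auxS (μ : Γ → ℝ) (F : Finset Γ) : Set (Γ → ℝ) :=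
  {h | (∀ x, 0 ≤ h x) ∧ h 1 = 1 ∧ ∀ x, h x = ∑ s ∈ F, μ s * h (s * x)}

lemma aux_super (μ : Γ → ℝ) (h0 : ∀ x, 0 ≤ μ x) (F : Finset Γ) (hF : ∀ s, s ∉ F → μ s = 0)
    (u : Γ → ℝ) (hu : ∀ x, 0 ≤ u x) (hh : ∀ x, ∑ s ∈ F, μ s * u (s * x) ≤ u x) (s w : Γ) :
    μ s * u (s * w) ≤ u w := by
  by_cases hs : s ∈ F
  · exact (Finset.single_le_sum (f := fun s => μ s * u (s * w))
      (fun i _ => mul_nonneg (h0 _) (hu _)) hs).trans (hh w)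
  · simp [hF s hs, hu]

lemma aux_compact (μ : Γ → ℝ) (h0 : ∀ x, 0 ≤ μ x) (hgen : IsGenerating μ)
    (F : Finset Γ) (hF : ∀ s, s ∉ F → μ s = 0) : IsCompact (auxS μ F) := by
  choose C hC H using aux_harnack μ h0 hgen
  refine (isCompact_univ_pi (fun x => isCompact_Icc (a := (0:ℝ)) (b := C x))).of_isClosed_subset
    ?_ ?_
  · have : auxS μ F = (⋂ x, {h | 0 ≤ h x}) ∩ ({h | h 1 = 1} ∩
        ⋂ x, {h | h x = ∑ s ∈ F, μ s * h (s * x)}) := by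
      ext h; simp [auxS]
    rw [this]
    refine (isClosed_iInter fun x => isClosed_le continuous_const (continuous_apply x)).inter
      ((isClosed_eq (continuous_apply 1) continuous_const).inter
      (isClosed_iInter fun x => isClosed_eq (continuous_apply x) ?_))
    exact continuous_finsetSum _ fun s _ => continuous_const.mul (continuous_apply _)
  · rintro h ⟨hp, h1, hh⟩ x -
    refine ⟨hp x, ?_⟩
    have := H x h hp (aux_super μ h0 F hF h hp fun x => (hh x).ge) 1
    simpa [h1] using this

lemma aux_translate (μ : Γ → ℝ) (h0 : ∀ x, 0 ≤ μ x) (hgen : IsGenerating μ)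
    (F : Finset Γ) (hF : ∀ s, s ∉ F → μ s = 0) {h : Γ → ℝ} (hS : h ∈ auxS μ F) (x : Γ) :
    0 < h x ∧ (fun z => h (z * x) / h x) ∈ auxS μ F := by
  obtain ⟨hp, h1, hh⟩ := hS
  have hx : 0 < h x := by
    refine (hp x).lt_of_ne fun h' => ?_
    obtain ⟨C, hC, H⟩ := aux_harnack μ h0 hgen x⁻¹
    have := H h hp (aux_super μ h0 F hF h hp fun x => (hh x).ge) x
    rw [← h', inv_mul_cancel, h1] at this
    norm_num at this
  refine ⟨hx, fun z => div_nonneg (hp _) hx.le, by simp [hx.ne'], fun z => ?_⟩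
  simp only
  rw [hh (z * x), Finset.sum_div]
  refine Finset.sum_congr rfl fun s _ => ?_
  rw [mul_assoc, mul_div_assoc]

lemma aux_invariant (μ : Γ → ℝ) (h0 : ∀ x, 0 ≤ μ x) (hgen : IsGenerating μ)
    (F : Finset Γ) (hF : ∀ s, s ∉ F → μ s = 0) (N : Subgroup Γ) [N.Normal] [Finite N]
    {k : Γ → ℝ} (hk : k ∈ auxS μ F) (a : N) (x : Γ) : k (a * x) = k x := by
  have hmax : ∀ g : N, ∃ h ∈ auxS μ F, ∀ k ∈ auxS μ F, k g ≤ h g := fun g =>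
    (aux_compact μ h0 hgen F hF).exists_isMaxOn ⟨k, hk⟩ (continuous_apply (g : Γ)).continuousOn
  choose m hmS hm using hmax
  obtain ⟨g, hg⟩ := Finite.exists_max (fun g : N => m g g)
  set M := m g g with hM
  have hle : ∀ k ∈ auxS μ F, ∀ b : N, k b ≤ M := fun k hk b => (hm b k hk).trans (hg b)
  have hle2 : ∀ k ∈ auxS μ F, ∀ (b : N) (x : Γ), k (b * x) ≤ M * k x := by
    intro k hk b x
    obtain ⟨hx, hT⟩ := aux_translate μ h0 hgen F hF hk x
    have := hle _ hT b
    rwa [div_le_iff₀ hx] at this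
  have hM1 : M = 1 := by
    obtain ⟨hp, h1, hh⟩ := hmS g
    have hu : ∀ x, 0 ≤ M * m g x - m g (x * g) := by
      intro x
      have := hle2 _ (hmS g) ⟨x * g * x⁻¹, Subgroup.Normal.conj_mem ‹_› _ g.2 x⟩ x
      simp only [inv_mul_cancel_right] at this
      linarith
    have heq : ∀ x, m g (x * g) = M * m g x := by
      intro x
      obtain ⟨C, hC, H⟩ := aux_harnack μ h0 hgen x
      have := H (fun x => M * m g x - m g (x * g)) hu
        (aux_super μ h0 F hF _ hu fun x => le_of_eq ?_) 1
      · simp only [mul_one, one_mul, h1, ← hM, sub_self, mul_zero] at this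
        linarith [hu x]
      · rw [hh x, hh (x * g), Finset.mul_sum, ← Finset.sum_sub_distrib]
        refine Finset.sum_congr rfl fun s _ => ?_
        rw [mul_assoc s x]; ring
    have hpow : ∀ n : ℕ, m g ((g : Γ) ^ n) = M ^ n := by
      intro n
      induction n with
      | zero => simpa using h1
      | succ n ih => rw [pow_succ, heq, ih, pow_succ, mul_comm]
    have h3 := hpow (orderOf g)
    have h4 : (g : Γ) ^ orderOf g = 1 := by
      have := pow_orderOf_eq_one g
      exact_mod_cast congrArg (Subtype.val) this
    rw [h4, h1] at h3
    exact (pow_eq_one_iff_of_nonneg (hp _) (orderOf_pos g).ne').1 h3.symm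
  rw [hM1] at hle2
  refine le_antisymm (by simpa using hle2 k hk a x) ?_
  simpa using hle2 k hk a⁻¹ (a * x)

lemma aux_sum_zero (N : Subgroup Γ) [Finite N] (f h : Γ → ℝ) (hf : (Function.support f).Finite)
    (hf_mean : ∀ x : Γ, ∑' g : N, f ((g : Γ) * x) = 0) (hinv : ∀ (a : N) x, h (a * x) = h x) :
    ∑' x, f x * h x = 0 := by
  cases nonempty_fintype N
  have h1 : ∀ a : N, ∑' x, f (a * x) * h x = ∑' x, f x * h x := by
    intro a
    rw [← (Equiv.mulLeft (a : Γ)).tsum_eq (fun x => f x * h x)]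
    simp [hinv]
  have hs : ∀ a : N, Summable fun x => f (a * x) * h x := by
    intro a
    refine summable_of_hasFiniteSupport ?_
    refine (hf.preimage ((mul_right_injective (a : Γ)).injOn)).subset ?_
    intro x hx
    simp only [Function.mem_support, Set.mem_preimage] at hx ⊢
    exact left_ne_zero_of_mul hx
  have h2 : ∑ a : N, ∑' x, f (a * x) * h x = 0 := by
    rw [← Summable.tsum_finsetSum (fun a _ => hs a)]
    simp_rw [← Finset.sum_mul]
    have : ∀ x, ∑ a : N, f (a * x) = 0 := fun x => by rw [← hf_mean x, tsum_fintype]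
    simp [this]
  simp_rw [h1] at h2
  simpa using h2

end aux


/-- For a finitely supported, generating, transient probability measure `μ` on
a countable group `Γ` with finite normal subgroup `N`: if `f : Γ → ℝ` is
finitely supported with `∑_{g ∈ N} f(g x) = 0` for every `x`, then
`y ↦ ∑_x f(x) K(x, y)` vanishes at infinity. -/
theorem martin_kernel_of_mean_zero_vanishes
    {Γ : Type*} [Group Γ] [Countable Γ]
    (N : Subgroup Γ) [N.Normal] [Finite N]
    (μ : Γ → ℝ) (hμ0 : ∀ x, 0 ≤ μ x) (hμ1 : HasSum μ 1)
    (hfin : (Function.support μ).Finite)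
    (hgen : IsGenerating μ) (htrans : IsTransient μ)
    (f : Γ → ℝ) (hf_fin : (Function.support f).Finite)
    (hf_mean : ∀ x : Γ, ∑' g : N, f ((g : Γ) * x) = 0) :
    Filter.Tendsto (fun y : Γ => ∑' x : Γ, f x * martinKernel μ x y)
      Filter.cofinite (nhds 0) := by
  classical
  set F := hfin.toFinset with hFdef
  have hF : ∀ s, s ∉ F → μ s = 0 := fun s hs => by simpa [hFdef] using hs
  have hGnn : ∀ y, 0 ≤ greenFn μ y := fun y => tsum_nonneg fun n => aux_pow_nonneg μ hμ0 n y
  have hGpos : ∀ y, 0 < greenFn μ y := by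
    intro y
    obtain ⟨n, -, hn⟩ := hgen y
    exact (htrans y).tsum_pos (fun n => aux_pow_nonneg μ hμ0 n y) n hn
  have hgreen : ∀ x y, greenFn μ (y * x⁻¹) = convPow μ 0 (y * x⁻¹) +
      ∑ s ∈ F, μ s * greenFn μ (y * (s * x)⁻¹) := by
    intro x y
    rw [aux_green μ hfin htrans]
    simp [mul_assoc, hFdef]
  choose C hC H using aux_harnack μ hμ0 hgen
  have hK : ∀ x y, martinKernel μ x y ∈ Set.Icc 0 (C x) := by
    intro x y
    refine ⟨div_nonneg (hGnn _) (hGnn _), ?_⟩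
    unfold martinKernel
    rw [div_le_iff₀ (hGpos y)]
    have := H x (fun x => greenFn μ (y * x⁻¹)) (fun _ => hGnn _)
      (aux_super μ hμ0 F hF (fun x => greenFn μ (y * x⁻¹)) (fun _ => hGnn _) fun x => ?_) 1
    · simpa using this
    · rw [hgreen x y]
      linarith [aux_pow_nonneg μ hμ0 0 (y * x⁻¹)]
  rw [Filter.tendsto_iff_ultrafilter]
  intro U hU
  have hlim : ∀ x, ∃ l, Filter.Tendsto (fun y => martinKernel μ x y) U (nhds l) := by
    intro x
    obtain ⟨l, -, hl⟩ := (isCompact_Icc (a := (0:ℝ)) (b := C x)).ultrafilter_le_nhds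
      (U.map (fun y => martinKernel μ x y))
      (Filter.le_principal_iff.2 (Filter.Eventually.of_forall (f := (U : Filter Γ)) fun y => hK x y))
    exact ⟨l, hl⟩
  choose h hh using hlim
  have hS : h ∈ auxS μ F := by
    refine ⟨fun x => ge_of_tendsto' (hh x) fun y => (hK x y).1, ?_, fun x => ?_⟩
    · refine tendsto_nhds_unique (hh 1) ?_
      have : ∀ y, martinKernel μ 1 y = 1 := fun y => by simp [martinKernel, (hGpos y).ne']
      simp [this]
    · refine tendsto_nhds_unique (hh x) ?_
      have ht : Filter.Tendsto (fun y => ∑ s ∈ F, μ s * martinKernel μ (s * x) y) U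
          (nhds (∑ s ∈ F, μ s * h (s * x))) :=
        tendsto_finsetSum _ fun s _ => (hh _).const_mul _
      refine ht.congr' ?_
      have hne : ∀ᶠ y in (U : Filter Γ), y ≠ x := hU (by simp)
      filter_upwards [hne] with y hy
      have hy' : y * x⁻¹ ≠ 1 := fun h' => hy (mul_inv_eq_one.1 h')
      unfold martinKernel
      rw [hgreen x y, Finset.sum_congr rfl (fun s _ => (mul_div_assoc _ _ _).symm),
        ← Finset.sum_div]
      simp [convPow, hy']
  have hz := aux_sum_zero N f h hf_fin hf_mean
    (fun a x => aux_invariant μ hμ0 hgen F hF N hS a x)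
  have hfs : ∀ k : Γ → ℝ, ∑' x, f x * k x = ∑ x ∈ hf_fin.toFinset, f x * k x := by
    intro k
    refine tsum_eq_sum fun x hx => ?_
    have : f x = 0 := by simpa using hx
    simp [this]
  rw [← hz]
  simp_rw [hfs]
  exact tendsto_finsetSum _ fun x _ => (hh x).const_mul _
end

section
/- Let Γ be a countable discrete group, N a finite normal subgroup of cardinality n, and μ a finitely supported, generating, transient probability measure on Γ with Green function G. Then the function y ↦ ∑_{g∈N} G(y·g)/G(y) tends to n along the cofinite filter on Γ, i.e. ∑_{g∈N} G(y·g)/G(y) − n vanishes at infinity. -/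
namespace GreenAux
open Filter Topology

variable {Γ : Type*} [Group Γ]

def IsSup (μ : Γ → ℝ) (f : Γ → ℝ) : Prop :=
  (∀ x, 0 ≤ f x) ∧ ∀ x s, μ s * f (s * x) ≤ f x

def Good (μ : Γ → ℝ) (s : Γ) : Prop :=
  ∃ c : ℝ, 0 < c ∧ ∀ f, IsSup μ f → ∀ x, c * f (s * x) ≤ f x

lemma good_mul {μ : Γ → ℝ} {s t : Γ} (hs : Good μ s) (ht : Good μ t) : Good μ (s * t) := by
  obtain ⟨c, hc, h1⟩ := hs
  obtain ⟨d, hd, h2⟩ := ht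
  refine ⟨d * c, mul_pos hd hc, fun f hf x => ?_⟩
  have := h1 f hf (t * x)
  have h3 := h2 f hf x
  rw [mul_assoc, mul_assoc]
  exact (mul_le_mul_of_nonneg_left this hd.le).trans h3

lemma convPow_nonneg {μ : Γ → ℝ} (h0 : ∀ x, 0 ≤ μ x) (n : ℕ) : ∀ x, 0 ≤ convPow μ n x := by
  induction n with
  | zero => intro x; exact Set.indicator_nonneg (fun _ _ => zero_le_one) x
  | succ n ih => intro x; exact tsum_nonneg fun y => mul_nonneg (ih y) (h0 _)

lemma good_of_pos {μ : Γ → ℝ} (h0 : ∀ x, 0 ≤ μ x) (n : ℕ) :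
    ∀ x, 0 < convPow μ n x → Good μ x := by
  induction n with
  | zero =>
    intro x hx
    have : x = 1 := by
      by_contra h
      simp [convPow, h] at hx
    subst this
    exact ⟨1, one_pos, fun f _ x => by simp⟩
  | succ n ih =>
    intro x hx
    have : ∃ y, convPow μ n y * μ (y⁻¹ * x) ≠ 0 := by
      by_contra! h
      simp [convPow, conv, h] at hx
    obtain ⟨y, hy⟩ := this
    have h1 := ih y (lt_of_le_of_ne (convPow_nonneg h0 n y) (left_ne_zero_of_mul hy).symm)
    have h2 : Good μ (y⁻¹ * x) :=
      ⟨μ (y⁻¹ * x), lt_of_le_of_ne (h0 _) (right_ne_zero_of_mul hy).symm,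
        fun f hf z => hf.2 z _⟩
    simpa using good_mul h1 h2

lemma good_all {μ : Γ → ℝ} (h0 : ∀ x, 0 ≤ μ x) (hg : IsGenerating μ) (x : Γ) : Good μ x := by
  obtain ⟨n, _, hn⟩ := hg x
  exact good_of_pos h0 n x hn

lemma green_pos {μ : Γ → ℝ} (h0 : ∀ x, 0 ≤ μ x) (hg : IsGenerating μ) (ht : IsTransient μ)
    (x : Γ) : 0 < greenFn μ x := by
  obtain ⟨n, _, hn⟩ := hg x
  exact (ht x).tsum_pos (fun i => convPow_nonneg h0 i x) n hn

lemma convPow_succ {μ : Γ → ℝ} (T : Finset Γ) (hT : ∀ s, s ∉ T → μ s = 0) (n : ℕ) (z : Γ) :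
    convPow μ (n + 1) z = ∑ s ∈ T, μ s * convPow μ n (z * s⁻¹) := by
  have e : convPow μ (n + 1) z = ∑' y, convPow μ n y * μ (y⁻¹ * z) := rfl
  rw [e, ← ((Equiv.inv Γ).trans (Equiv.mulLeft z)).tsum_eq]
  rw [tsum_eq_sum (s := T)]
  · refine Finset.sum_congr rfl fun s _ => ?_
    simp [mul_comm]
  · intro s hs
    simp [hT s hs]

lemma green_eq {μ : Γ → ℝ} (T : Finset Γ) (hT : ∀ s, s ∉ T → μ s = 0) (ht : IsTransient μ)
    (z : Γ) :
    greenFn μ z = convPow μ 0 z + ∑ s ∈ T, μ s * greenFn μ (z * s⁻¹) := by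
  have e : greenFn μ z = ∑' n, convPow μ n z := rfl
  rw [e, (ht z).tsum_eq_zero_add]
  congr 1
  simp_rw [convPow_succ T hT]
  rw [Summable.tsum_finsetSum (fun s _ => (ht _).mul_left _)]
  refine Finset.sum_congr rfl fun s _ => ?_
  rw [tsum_mul_left]; rfl

/-- normalized positive harmonic functions -/
def KK (μ : Γ → ℝ) (T : Finset Γ) : Set (Γ → ℝ) :=
  {h | (∀ x, 0 ≤ h x) ∧ (∀ x, ∑ s ∈ T, μ s * h (s * x) = h x) ∧ h 1 = 1}

lemma isSup_of_le {μ : Γ → ℝ} (h0 : ∀ x, 0 ≤ μ x) (T : Finset Γ) (hT : ∀ s, s ∉ T → μ s = 0)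
    {f : Γ → ℝ} (hf : ∀ x, 0 ≤ f x) (h : ∀ x, ∑ s ∈ T, μ s * f (s * x) ≤ f x) : IsSup μ f := by
  refine ⟨hf, fun x s => ?_⟩
  by_cases hs : s ∈ T
  · exact (Finset.single_le_sum (f := fun s => μ s * f (s * x))
      (fun i _ => mul_nonneg (h0 i) (hf _)) hs).trans (h x)
  · simp [hT s hs, hf]

lemma convex_KK (μ : Γ → ℝ) (T : Finset Γ) : Convex ℝ (KK μ T) := by
  rintro f ⟨f0, f1, f2⟩ g ⟨g0, g1, g2⟩ a b ha hb hab
  refine ⟨fun x => ?_, fun x => ?_, ?_⟩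
  · have := f0 x
    have := g0 x
    simp only [Pi.add_apply, Pi.smul_apply, smul_eq_mul]; positivity
  · simp only [Pi.add_apply, Pi.smul_apply, smul_eq_mul]
    rw [← f1 x, ← g1 x, Finset.mul_sum, Finset.mul_sum, ← Finset.sum_add_distrib]
    exact Finset.sum_congr rfl fun s _ => by ring
  · simp [f2, g2, hab]

lemma isClosed_KK (μ : Γ → ℝ) (T : Finset Γ) : IsClosed (KK μ T) := by
  have : KK μ T = (⋂ x, {h : Γ → ℝ | 0 ≤ h x}) ∩
      ((⋂ x, {h : Γ → ℝ | ∑ s ∈ T, μ s * h (s * x) = h x}) ∩ {h | h 1 = 1}) := by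
    ext h; simp [KK]
  rw [this]
  refine (isClosed_iInter fun x => isClosed_le (by fun_prop) (by fun_prop)).inter
    ((isClosed_iInter fun x => isClosed_eq (by fun_prop) (by fun_prop)).inter
      (isClosed_eq (by fun_prop) (by fun_prop)))

lemma isCompact_KK {μ : Γ → ℝ} (h0 : ∀ x, 0 ≤ μ x) (hg : IsGenerating μ)
    (T : Finset Γ) (hT : ∀ s, s ∉ T → μ s = 0) : IsCompact (KK μ T) := by
  choose c hc h using good_all h0 hg
  refine (isCompact_univ_pi (fun x : Γ => isCompact_Icc (a := (0:ℝ)) (b := 1 / c x))).of_isClosed_subset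
    (isClosed_KK μ T) ?_
  rintro f ⟨f0, f1, f2⟩ x _
  refine ⟨f0 x, ?_⟩
  have := h x f (isSup_of_le h0 T hT f0 (fun x => (f1 x).le)) 1
  rw [mul_one, f2] at this
  rw [le_div_iff₀ (hc x)]; linarith

lemma extreme_inv {μ : Γ → ℝ} (h0 : ∀ x, 0 ≤ μ x) (hg : IsGenerating μ)
    (T : Finset Γ) (hT : ∀ s, s ∉ T → μ s = 0) (N : Subgroup Γ) [N.Normal] [Finite N]
    {f : Γ → ℝ} (hf : f ∈ (KK μ T).extremePoints ℝ) (g : Γ) (hgN : g ∈ N) : f g = 1 := by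
  choose c hc h using good_all h0 hg
  obtain ⟨⟨f0, f1, f2⟩, hext⟩ := hf
  have hsup := isSup_of_le h0 T hT f0 (fun x => (f1 x).le)
  obtain ⟨m, hm⟩ := Finite.exists_min (fun s : N => c s)
  set d := c m with hd
  have hd0 : 0 < d := hc _
  have H : ∀ x, d * f (x * g) ≤ f x := by
    intro x
    have h1 := h (x * g * x⁻¹) f hsup x
    have h2 := hm ⟨x * g * x⁻¹, Subgroup.Normal.conj_mem ‹_› g hgN x⟩
    simp only [inv_mul_cancel_right] at h1
    exact (mul_le_mul_of_nonneg_right h2 (f0 _)).trans h1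
  have ha : 0 < f g := by
    have h1 := h g⁻¹ f hsup g
    rw [inv_mul_cancel, f2] at h1
    linarith [hc g⁻¹]
  have hd1 : d * f g ≤ 1 := by simpa [f2] using H 1
  have hda : 0 < d * f g := mul_pos hd0 ha
  set a := f g with haa
  set l := d * a / 2 with hl
  have hl0 : 0 < l := by positivity
  have hl1 : 0 < 1 - l := by linarith
  have m1 : (fun x => f (x * g) / a) ∈ KK μ T := by
    refine ⟨fun x => div_nonneg (f0 _) ha.le, fun x => ?_, ?_⟩
    · simp only
      rw [← f1 (x * g), Finset.sum_div]
      exact Finset.sum_congr rfl fun s _ => by rw [mul_assoc]; ring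
    · simp only [one_mul]; exact div_self ha.ne'
  have m2 : (fun x => (f x - d / 2 * f (x * g)) / (1 - l)) ∈ KK μ T := by
    refine ⟨fun x => div_nonneg ?_ hl1.le, fun x => ?_, ?_⟩
    · have := H x
      have := f0 x
      linarith
    · simp only
      rw [← f1 (x * g), ← f1 x, Finset.mul_sum, ← Finset.sum_sub_distrib, Finset.sum_div]
      exact Finset.sum_congr rfl fun s _ => by rw [mul_assoc]; ring
    · simp only [one_mul, f2]
      rw [← haa, div_eq_one_iff_eq hl1.ne', hl]; ring
  have key := hext m1 m2 ⟨l, 1 - l, hl0, hl1, by ring, by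
    ext x
    simp only [Pi.add_apply, Pi.smul_apply, smul_eq_mul]
    rw [mul_div_cancel₀ _ hl1.ne', hl]
    field_simp
    ring⟩
  have key2 : ∀ x, f (x * g) = a * f x := by
    intro x
    have hx : f (x * g) / a = f x := congrFun key x
    rw [div_eq_iff ha.ne'] at hx
    linarith
  have key3 : ∀ k : ℕ, f (g ^ k) = a ^ k := by
    intro k
    induction k with
    | zero => simp [f2]
    | succ k ih => rw [pow_succ, key2, ih, pow_succ]; ring
  have hfo : IsOfFinOrder g := by
    have := isOfFinOrder_of_finite (⟨g, hgN⟩ : N)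
    exact N.subtype.isOfFinOrder this
  obtain ⟨k, hk, hk1⟩ := isOfFinOrder_iff_pow_eq_one.1 hfo
  have := key3 k
  rw [hk1, f2] at this
  exact (pow_eq_one_iff_of_nonneg ha.le hk.ne').1 this.symm

lemma harm_inv {μ : Γ → ℝ} (h0 : ∀ x, 0 ≤ μ x) (hg : IsGenerating μ)
    (T : Finset Γ) (hT : ∀ s, s ∉ T → μ s = 0) (N : Subgroup Γ) [N.Normal] [Finite N]
    {f : Γ → ℝ} (hf : f ∈ KK μ T) (g : Γ) (hgN : g ∈ N) : f g = 1 := by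
  rw [← closure_convexHull_extremePoints (isCompact_KK h0 hg T hT) (convex_KK μ T)] at hf
  have hcl : IsClosed {f : Γ → ℝ | f g = 1} := isClosed_eq (by fun_prop) (by fun_prop)
  have hcv : Convex ℝ {f : Γ → ℝ | f g = 1} := by
    intro f hf f' hf' a b _ _ hab
    simp only [Set.mem_ofPred_eq] at hf hf'
    simp [hf, hf', hab]
  exact closure_minimal (convexHull_min
    (fun f hf => extreme_inv h0 hg T hT N hf g hgN) hcv) hcl hf

lemma ratio_tendsto {μ : Γ → ℝ} (h0 : ∀ x, 0 ≤ μ x) (hg : IsGenerating μ) (ht : IsTransient μ)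
    (T : Finset Γ) (hT : ∀ s, s ∉ T → μ s = 0) (N : Subgroup Γ) [N.Normal] [Finite N]
    (g : Γ) (hgN : g ∈ N) :
    Tendsto (fun y => greenFn μ (y * g) / greenFn μ y) cofinite (𝓝 1) := by
  rw [tendsto_iff_ultrafilter]
  intro U hU
  have hpos := green_pos h0 hg ht
  set K : Γ → Γ → ℝ := fun y x => greenFn μ (y * x⁻¹) / greenFn μ y with hK
  have hKeq : ∀ y x, K y x = convPow μ 0 (y * x⁻¹) / greenFn μ y + ∑ s ∈ T, μ s * K y (s * x) := by
    intro y x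
    simp only [hK]
    rw [green_eq T hT ht (y * x⁻¹), add_div, Finset.sum_div]
    congr 1
    exact Finset.sum_congr rfl fun s _ => by rw [mul_inv_rev, mul_assoc, mul_div_assoc]
  have hK0 : ∀ y x, 0 ≤ K y x := fun y x => (div_pos (hpos _) (hpos _)).le
  have hKs : ∀ y, IsSup μ (K y) := fun y => isSup_of_le h0 T hT (hK0 y) fun x => by
    rw [hKeq y x]
    have := div_nonneg (convPow_nonneg h0 0 (y * x⁻¹)) (hpos y).le
    linarith
  have hK1 : ∀ y, K y 1 = 1 := fun y => by simp [hK, (hpos y).ne']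
  choose c hc h using good_all h0 hg
  have hlim : ∀ x, ∃ l, Tendsto (fun y => K y x) U (𝓝 l) := by
    intro x
    have hb : ∀ y, K y x ∈ Set.Icc (0:ℝ) (1 / c x) := fun y => by
      refine ⟨hK0 y x, ?_⟩
      have := h x (K y) (hKs y) 1
      rw [mul_one, hK1] at this
      rw [le_div_iff₀ (hc x)]; linarith
    obtain ⟨l, _, hl⟩ := isCompact_Icc.ultrafilter_le_nhds (U.map (fun y => K y x))
      (le_principal_iff.2 (Filter.mem_map.2 (Filter.univ_mem' hb)))
    exact ⟨l, hl⟩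
  choose f hf using hlim
  have hfK : f ∈ KK μ T := by
    refine ⟨fun x => ge_of_tendsto' (hf x) fun y => hK0 y x, fun x => ?_, ?_⟩
    · have t1 : Tendsto (fun y => ∑ s ∈ T, μ s * K y (s * x)) U
          (𝓝 (∑ s ∈ T, μ s * f (s * x))) :=
        tendsto_finsetSum _ fun s _ => (hf (s * x)).const_mul _
      refine tendsto_nhds_unique t1 ((hf x).congr' ?_)
      have : ∀ᶠ y in (U : Filter Γ), y ≠ x := hU (by
        have : {x}ᶜ ∈ (cofinite : Filter Γ) := (Set.finite_singleton x).compl_mem_cofinite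
        exact this)
      filter_upwards [this] with y hy
      rw [hKeq y x]
      have : y * x⁻¹ ≠ 1 := by rwa [Ne, mul_inv_eq_one]
      simp [convPow, this]
    · refine tendsto_nhds_unique (hf 1) ?_
      simp only [hK1]; exact tendsto_const_nhds
  have := hf g⁻¹
  rw [harm_inv h0 hg T hT N hfK g⁻¹ (N.inv_mem hgN)] at this
  simpa [hK] using this

end GreenAux

/-- For a finitely supported, generating, transient probability measure `μ` on
a countable group `Γ` with finite normal subgroup `N` of cardinality `n`, the
function `y ↦ ∑_{g ∈ N} G(y g) / G(y)` tends to `n` along the cofinite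
filter on `Γ`. -/
theorem green_ratio_tendsto_card
    {Γ : Type*} [Group Γ] [Countable Γ]
    (N : Subgroup Γ) [N.Normal] [Finite N]
    (μ : Γ → ℝ) (hμ0 : ∀ x, 0 ≤ μ x) (hμ1 : HasSum μ 1)
    (hfin : (Function.support μ).Finite)
    (hgen : IsGenerating μ) (htrans : IsTransient μ) :
    Filter.Tendsto (fun y : Γ => ∑' g : N, greenFn μ (y * (g : Γ)) / greenFn μ y)
      Filter.cofinite (nhds (Nat.card N : ℝ)) := by
  classical
  have := Fintype.ofFinite N
  simp_rw [tsum_fintype]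
  have e : (Nat.card N : ℝ) = ∑ g : N, (1 : ℝ) := by simp [Nat.card_eq_fintype_card]
  rw [e]
  refine tendsto_finsetSum _ fun g _ => ?_
  exact GreenAux.ratio_tendsto hμ0 hgen htrans hfin.toFinset
    (fun s hs => by simpa using hs) N g g.2
end
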